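/- arXiv:2410.21550 — 7 statements merged into one kernel-verified Lean document; each statement's English description precedes it below -/
import Mathlib

section
/- Let n ≥ 2 and let H be an n×n real symmetric arrowhead matrix with arrow head α, shaft z = (z_2, …, z_n), and diagonal D = diag(d_2, …, d_n), where d_2 < d_3 < … < d_n and z_j ≠ 0 for every j = 2, …, n. Then: (i) a real number λ ∉ {d_2, …, d_n} is an eigenvalue of H if and only if f(λ) = 0, where f is the secular function of H; and (ii) H has n distinct eigenvalues λ_1 < λ_2 < … < λ_n, none of which equals any d_j, and they strictly interlace the diagonal entries: λ_1 < d_2 < λ_2 < d_3 < … < d_n < λ_n. -/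
/-!
Write an eigenvector as `(x, y)`. The eigenvalue equations are `a x + ∑ z_j y_j = μ x` and
`z_k x + d_k y_k = μ y_k`. If `μ = d_k`, the `k`-th equation forces `x = 0`, the others then force
`y_j = 0` for `j ≠ k`, and the head equation gives `y_k = 0`; so no `d_k` is an eigenvalue
(`not_isEigen_diag`). If `μ` is not a diagonal entry, then `y_k = z_k x / (μ - d_k)`, and the head
equation becomes `f(μ) x = 0` for the secular function `f` (`isEigen_iff`).

The points `d_j` cut the line into `m + 1` open intervals (`gap`). On each of them `f` is
continuous and strictly increasing, since
`f(ν) - f(μ) = (ν - μ) (1 + ∑ z_j² / ((d_j - μ) (d_j - ν)))` and `d_j - μ`, `d_j - ν` have the same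
sign. Moreover `f` tends to `-∞` at the left end of every gap and to `+∞` at the right end, so it
has exactly one zero in each gap. Listing these zeros in order gives the interlacing.
-/

open Matrix

/-- The `(m+1) × (m+1)` real symmetric arrowhead matrix `[[a, zᵀ],[z, diag d]]`
with arrow head `a`, shaft `z` and diagonal `d`. -/
def arrowhead {m : ℕ} (a : ℝ) (z d : Fin m → ℝ) :
    Matrix (Fin (m + 1)) (Fin (m + 1)) ℝ :=
  Matrix.of (Fin.cons (Fin.cons a z) fun k => Fin.cons (z k) fun l => if k = l then d k else 0)

open Filter Topology

/-- The secular function `f(μ) = μ - a + ∑ z_j² / (d_j - μ)`; it is only meaningful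
when `μ` differs from all `d_j`. -/
noncomputable def secular {m : ℕ} (a : ℝ) (z d : Fin m → ℝ) (μ : ℝ) : ℝ :=
  μ - a + ∑ j, z j ^ 2 / (d j - μ)

/-- The `k`-th of the `m + 1` open intervals cut out by the diagonal entries: the entries with
index `< k` lie to the left, the others to the right. The extreme intervals are unbounded. -/
def gap {m : ℕ} (d : Fin m → ℝ) (k : Fin (m + 1)) : Set ℝ :=
  {x | ∀ j : Fin m, (j.castSucc < k → d j < x) ∧ (k ≤ j.castSucc → x < d j)}

lemma mem_spectrum_iff {m : ℕ} (a : ℝ) (z d : Fin m → ℝ) (μ : ℝ) :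
    μ ∈ spectrum ℝ (arrowhead a z d) ↔
      ∃ (x : ℝ) (y : Fin m → ℝ), (x ≠ 0 ∨ y ≠ 0) ∧ a * x + ∑ j, z j * y j = μ * x ∧
        ∀ k, z k * x + d k * y k = μ * y k := by
  rw [← Matrix.spectrum_toLin', ← Module.End.hasEigenvalue_iff_mem_spectrum]
  have key : ∀ (x : ℝ) (y : Fin m → ℝ),
      Matrix.toLin' (arrowhead a z d) (Fin.cons x y : Fin (m + 1) → ℝ)
        = μ • (Fin.cons x y : Fin (m + 1) → ℝ) ↔
      a * x + ∑ j, z j * y j = μ * x ∧ ∀ k, z k * x + d k * y k = μ * y k := by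
    intro x y
    rw [funext_iff, Fin.forall_fin_succ]
    simp [arrowhead, Matrix.toLin'_apply, Matrix.mulVec, dotProduct, Fin.sum_univ_succ]
  constructor
  · intro h
    obtain ⟨v, hv⟩ := h.exists_hasEigenvector
    have h1 := hv.apply_eq_smul
    rw [← Fin.cons_self_tail v] at h1
    refine ⟨v 0, Fin.tail v, ?_, (key _ _).1 h1⟩
    by_contra! h0
    apply hv.2
    rw [← Fin.cons_self_tail v, h0.1, h0.2]
    ext i
    refine Fin.cases ?_ (fun j => ?_) i <;> simp
  · rintro ⟨x, y, h0, h⟩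
    refine Module.End.hasEigenvalue_of_hasEigenvector
      (x := (Fin.cons x y : Fin (m + 1) → ℝ))
      ⟨Module.End.mem_eigenspace_iff.2 ((key x y).2 h), fun hc => ?_⟩
    rcases h0 with h0 | h0
    · exact h0 (by simpa using congrFun hc 0)
    · exact h0 (funext fun j => by simpa using congrFun hc j.succ)

lemma not_isEigen_diag {m : ℕ} (a : ℝ) (z d : Fin m → ℝ) (hd : StrictMono d)
    (hz : ∀ j, z j ≠ 0) (k : Fin m) : d k ∉ spectrum ℝ (arrowhead a z d) := by
  rw [mem_spectrum_iff]
  rintro ⟨x, y, h0, h1, h2⟩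
  have hx : x = 0 := by
    have := h2 k
    have : z k * x = 0 := by linarith
    exact (mul_eq_zero.1 this).resolve_left (hz k)
  subst hx
  have hy : ∀ j, j ≠ k → y j = 0 := by
    intro j hj
    have h3 := h2 j
    have : (d j - d k) * y j = 0 := by linarith
    exact (mul_eq_zero.1 this).resolve_left (sub_ne_zero.2 (hd.injective.ne hj))
  rw [Finset.sum_eq_single k (fun j _ hj => by simp [hy j hj]) (by simp)] at h1
  have hk : y k = 0 := by
    have : z k * y k = 0 := by linarith
    exact (mul_eq_zero.1 this).resolve_left (hz k)
  have : y = 0 := by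
    ext j
    by_cases hj : j = k
    · rw [hj, hk]; rfl
    · exact hy j hj
  simp [this] at h0

lemma isEigen_iff {m : ℕ} (a : ℝ) (z d : Fin m → ℝ) (μ : ℝ) (hμ : ∀ j, μ ≠ d j) :
    μ ∈ spectrum ℝ (arrowhead a z d) ↔ secular a z d μ = 0 := by
  have hne : ∀ j, d j - μ ≠ 0 := fun j => sub_ne_zero.2 (hμ j).symm
  rw [mem_spectrum_iff]
  -- Substituting the value of `y` turns the sum in the head equation into that of `secular`.
  have hsum : ∀ x : ℝ, ∑ j, z j * (-(z j * x) / (d j - μ))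
      = -((∑ j, z j ^ 2 / (d j - μ)) * x) := by
    intro x
    rw [Finset.sum_mul, ← Finset.sum_neg_distrib]
    exact Finset.sum_congr rfl fun j _ => by ring
  constructor
  · rintro ⟨x, y, h0, h1, h2⟩
    have hy : ∀ j, y j = -(z j * x) / (d j - μ) := by
      intro j
      rw [eq_div_iff (hne j)]
      linarith [h2 j]
    have hx : x ≠ 0 := by
      rintro rfl
      have : y = 0 := funext fun j => by simp [hy j]
      simp [this] at h0
    have h3 : secular a z d μ * x = 0 := by
      simp only [hy, hsum] at h1
      unfold secular
      linarith
    exact (mul_eq_zero.1 h3).resolve_right hx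
  · intro h
    refine ⟨1, fun j => -(z j * 1) / (d j - μ), Or.inl one_ne_zero, ?_, fun k => ?_⟩
    · rw [hsum]
      unfold secular at h
      linarith
    · have := hne k
      field_simp
      ring

lemma gap_ne {m : ℕ} {d : Fin m → ℝ} {k : Fin (m + 1)} {x : ℝ} (hx : x ∈ gap d k) (j : Fin m) :
    x ≠ d j := by
  rcases lt_or_ge j.castSucc k with h | h
  · exact ((hx j).1 h).ne'
  · exact ((hx j).2 h).ne

lemma ordConnected_gap {m : ℕ} (d : Fin m → ℝ) (k : Fin (m + 1)) : (gap d k).OrdConnected :=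
  ⟨fun _ hx _ hy _ hw j =>
    ⟨fun h => ((hx j).1 h).trans_le hw.1, fun h => hw.2.trans_lt ((hy j).2 h)⟩⟩

lemma exists_mem_gap {m : ℕ} {d : Fin m → ℝ} (hd : StrictMono d) {x : ℝ} (hx : ∀ j, x ≠ d j) :
    ∃ k, x ∈ gap d k := by
  refine ⟨(Finset.univ.filter fun j => d j < x).sup Fin.succ, fun j => ⟨fun h => ?_, fun h => ?_⟩⟩
  · obtain ⟨i, hi, hji⟩ := Finset.lt_sup_iff.1 h
    exact (hd.monotone (Fin.castSucc_lt_succ_iff.1 hji)).trans_lt (Finset.mem_filter.1 hi).2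
  · by_contra hc
    have hj : d j < x := lt_of_le_of_ne (not_lt.1 hc) (hx j).symm
    have h1 : j.succ ≤ (Finset.univ.filter fun j => d j < x).sup Fin.succ :=
      Finset.le_sup (f := Fin.succ) (Finset.mem_filter.2 ⟨Finset.mem_univ j, hj⟩)
    exact absurd (h1.trans h) (not_le.2 Fin.castSucc_lt_succ)

lemma continuousOn_secular {m : ℕ} (a : ℝ) (z d : Fin m → ℝ) (k : Fin (m + 1)) :
    ContinuousOn (secular a z d) (gap d k) := by
  unfold secular
  refine (by fun_prop : ContinuousOn (fun μ : ℝ => μ - a) _).add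
    (continuousOn_finsetSum _ fun j _ => ?_)
  exact continuousOn_const.div (by fun_prop) fun x hx => sub_ne_zero.2 (gap_ne hx j).symm

lemma strictMonoOn_secular {m : ℕ} (a : ℝ) (z d : Fin m → ℝ) (k : Fin (m + 1)) :
    StrictMonoOn (secular a z d) (gap d k) := by
  intro x hx y hy hxy
  have : ∑ j, z j ^ 2 / (d j - x) ≤ ∑ j, z j ^ 2 / (d j - y) := by
    refine Finset.sum_le_sum fun j _ => ?_
    have h1 : d j - x ≠ 0 := sub_ne_zero.2 (gap_ne hx j).symm
    have h2 : d j - y ≠ 0 := sub_ne_zero.2 (gap_ne hy j).symm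
    have hpos : 0 < (d j - x) * (d j - y) := by
      rcases lt_or_ge j.castSucc k with h | h
      · exact mul_pos_of_neg_of_neg (by linarith [(hx j).1 h]) (by linarith [(hy j).1 h])
      · exact mul_pos (by linarith [(hx j).2 h]) (by linarith [(hy j).2 h])
    have h3 : z j ^ 2 / (d j - y) - z j ^ 2 / (d j - x)
        = z j ^ 2 * (y - x) / ((d j - x) * (d j - y)) := by
      field_simp
      ring
    have h4 : 0 ≤ z j ^ 2 * (y - x) / ((d j - x) * (d j - y)) :=
      div_nonneg (mul_nonneg (sq_nonneg _) (by linarith)) hpos.le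
    linarith
  unfold secular
  linarith

/-- Near a pole `d k`, the secular function is the singular term plus a function continuous
at `d k`. -/
lemma secular_split {m : ℕ} (a : ℝ) (z : Fin m → ℝ) {d : Fin m → ℝ} (hd : StrictMono d)
    (k : Fin m) : ∃ g : ℝ → ℝ, ContinuousAt g (d k) ∧
      ∀ μ, secular a z d μ = g μ + z k ^ 2 * (d k - μ)⁻¹ := by
  refine ⟨fun μ => μ - a + ∑ j ∈ Finset.univ.erase k, z j ^ 2 / (d j - μ), ?_, fun μ => ?_⟩
  · refine (by fun_prop : ContinuousAt (fun μ : ℝ => μ - a) _).add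
      (tendsto_finsetSum _ fun j hj => ?_)
    have : d j - d k ≠ 0 := sub_ne_zero.2 (hd.injective.ne (Finset.ne_of_mem_erase hj))
    exact ContinuousAt.div continuousAt_const (by fun_prop) this
  · unfold secular
    rw [← Finset.sum_erase_add _ _ (Finset.mem_univ k), div_eq_mul_inv (z k ^ 2)]
    ring

lemma tendsto_secular_right {m : ℕ} (a : ℝ) {z d : Fin m → ℝ} (hd : StrictMono d)
    (hz : ∀ j, z j ≠ 0) (k : Fin m) : Tendsto (secular a z d) (𝓝[>] (d k)) atBot := by
  obtain ⟨g, hg, h⟩ := secular_split a z hd k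
  rw [funext h]
  refine (hg.mono_left nhdsWithin_le_nhds).add_atBot
    (Tendsto.const_mul_atBot (sq_pos_of_ne_zero (hz k)) ?_)
  refine tendsto_inv_nhdsLT_zero.comp (tendsto_nhdsWithin_iff.2 ⟨?_, ?_⟩)
  · have : Tendsto (fun μ => d k - μ) (𝓝 (d k)) (𝓝 (d k - d k)) :=
      (by fun_prop : Continuous fun μ => d k - μ).tendsto _
    rw [sub_self] at this
    exact this.mono_left nhdsWithin_le_nhds
  · filter_upwards [self_mem_nhdsWithin] with μ hμ
    exact sub_neg.2 (Set.mem_Ioi.1 hμ)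

lemma tendsto_secular_left {m : ℕ} (a : ℝ) {z d : Fin m → ℝ} (hd : StrictMono d)
    (hz : ∀ j, z j ≠ 0) (k : Fin m) : Tendsto (secular a z d) (𝓝[<] (d k)) atTop := by
  obtain ⟨g, hg, h⟩ := secular_split a z hd k
  rw [funext h]
  refine (hg.mono_left nhdsWithin_le_nhds).add_atTop
    (Tendsto.const_mul_atTop (sq_pos_of_ne_zero (hz k)) ?_)
  refine tendsto_inv_nhdsGT_zero.comp (tendsto_nhdsWithin_iff.2 ⟨?_, ?_⟩)
  · have : Tendsto (fun μ => d k - μ) (𝓝 (d k)) (𝓝 (d k - d k)) :=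
      (by fun_prop : Continuous fun μ => d k - μ).tendsto _
    rw [sub_self] at this
    exact this.mono_left nhdsWithin_le_nhds
  · filter_upwards [self_mem_nhdsWithin] with μ hμ
    exact sub_pos.2 (Set.mem_Iio.1 hμ)

lemma tendsto_secular_atTop {m : ℕ} (a : ℝ) (z d : Fin m → ℝ) :
    Tendsto (secular a z d) atTop atTop :=
  (tendsto_atTop_add_const_right _ (-a) tendsto_id).atTop_add
    (tendsto_finsetSum _ fun j _ => tendsto_const_nhds.div_atBot
      (tendsto_atBot_add_const_left _ (d j) tendsto_neg_atTop_atBot))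

lemma tendsto_secular_atBot {m : ℕ} (a : ℝ) (z d : Fin m → ℝ) :
    Tendsto (secular a z d) atBot atBot :=
  (tendsto_atBot_add_const_right _ (-a) tendsto_id).atBot_add
    (tendsto_finsetSum _ fun j _ => tendsto_const_nhds.div_atTop
      (tendsto_atTop_add_const_left _ (d j) tendsto_neg_atBot_atTop))

lemma exists_secular_nonpos {m : ℕ} (a : ℝ) {z d : Fin m → ℝ} (hd : StrictMono d)
    (hz : ∀ j, z j ≠ 0) (k : Fin (m + 1)) : ∃ x ∈ gap d k, secular a z d x ≤ 0 := by
  refine Fin.cases ?_ (fun i => ?_) k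
  · have h1 := (tendsto_secular_atBot a z d).eventually_le_atBot 0
    have h2 : ∀ᶠ x in atBot, ∀ j, x < d j := eventually_all.2 fun j => eventually_lt_atBot (d j)
    obtain ⟨x, hx1, hx2⟩ := (h1.and h2).exists
    exact ⟨x, fun j => ⟨fun h => absurd h (Fin.not_lt_zero _), fun _ => hx2 j⟩, hx1⟩
  · have h1 := (tendsto_secular_right a hd hz i).eventually_le_atBot 0
    have h2 : ∀ᶠ x in 𝓝[>] (d i), ∀ j, i < j → x < d j :=
      eventually_all.2 fun j => by
        by_cases hj : i < j
        · filter_upwards [nhdsWithin_le_nhds (eventually_lt_nhds (hd hj))] with x hx _ using hx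
        · exact Eventually.of_forall fun x h => absurd h hj
    obtain ⟨x, ⟨hx1, hx2⟩, hx3⟩ := ((h1.and h2).and self_mem_nhdsWithin).exists
    refine ⟨x, fun j => ⟨fun h => ?_, fun h => hx2 j (Fin.succ_le_castSucc_iff.1 h)⟩, hx1⟩
    exact (hd.monotone (Fin.castSucc_lt_succ_iff.1 h)).trans_lt hx3

lemma exists_secular_nonneg {m : ℕ} (a : ℝ) {z d : Fin m → ℝ} (hd : StrictMono d)
    (hz : ∀ j, z j ≠ 0) (k : Fin (m + 1)) : ∃ x ∈ gap d k, 0 ≤ secular a z d x := by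
  refine Fin.lastCases ?_ (fun i => ?_) k
  · have h1 := (tendsto_secular_atTop a z d).eventually_ge_atTop 0
    have h2 : ∀ᶠ x in atTop, ∀ j, d j < x := eventually_all.2 fun j => eventually_gt_atTop (d j)
    obtain ⟨x, hx1, hx2⟩ := (h1.and h2).exists
    exact ⟨x, fun j => ⟨fun _ => hx2 j, fun h => absurd h (not_le.2 (Fin.castSucc_lt_last j))⟩, hx1⟩
  · have h1 := (tendsto_secular_left a hd hz i).eventually_ge_atTop 0
    have h2 : ∀ᶠ x in 𝓝[<] (d i), ∀ j, j < i → d j < x :=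
      eventually_all.2 fun j => by
        by_cases hj : j < i
        · filter_upwards [nhdsWithin_le_nhds (eventually_gt_nhds (hd hj))] with x hx _ using hx
        · exact Eventually.of_forall fun x h => absurd h hj
    obtain ⟨x, ⟨hx1, hx2⟩, hx3⟩ := ((h1.and h2).and self_mem_nhdsWithin).exists
    refine ⟨x, fun j => ⟨fun h => hx2 j (Fin.castSucc_lt_castSucc_iff.1 h), fun h => ?_⟩, hx1⟩
    exact lt_of_lt_of_le hx3 (hd.monotone (Fin.castSucc_le_castSucc_iff.1 h))

lemma exists_zero {m : ℕ} (a : ℝ) {z d : Fin m → ℝ} (hd : StrictMono d)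
    (hz : ∀ j, z j ≠ 0) (k : Fin (m + 1)) : ∃ x ∈ gap d k, secular a z d x = 0 := by
  obtain ⟨x, hx, hx0⟩ := exists_secular_nonpos a hd hz k
  obtain ⟨y, hy, hy0⟩ := exists_secular_nonneg a hd hz k
  exact (ordConnected_gap d k).isPreconnected.intermediate_value hx hy
    (continuousOn_secular a z d k) ⟨hx0, hy0⟩

theorem stmt_0 {m : ℕ} (hm : 1 ≤ m) (a : ℝ) (z d : Fin m → ℝ)
    (hd : StrictMono d) (hz : ∀ j, z j ≠ 0) :
    (∀ μ : ℝ, (∀ j, μ ≠ d j) →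
      (μ ∈ spectrum ℝ (arrowhead a z d) ↔ μ - a + ∑ j, z j ^ 2 / (d j - μ) = 0)) ∧
    ∃ lam : Fin (m + 1) → ℝ,
      StrictMono lam ∧
      spectrum ℝ (arrowhead a z d) = Set.range lam ∧
      (∀ i j, lam i ≠ d j) ∧
      (∀ k : Fin m, lam (Fin.castSucc k) < d k ∧ d k < lam (Fin.succ k)) := by
  refine ⟨fun μ hμ => isEigen_iff a z d μ hμ, ?_⟩
  choose lam hgap hzero using exists_zero a hd hz
  have hlace : ∀ k : Fin m, lam (Fin.castSucc k) < d k ∧ d k < lam (Fin.succ k) := fun k =>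
    ⟨(hgap _ k).2 le_rfl, (hgap _ k).1 Fin.castSucc_lt_succ⟩
  refine ⟨lam, Fin.strictMono_iff_lt_succ.2 fun k => (hlace k).1.trans (hlace k).2, ?_,
    fun i j => gap_ne (hgap i) j, hlace⟩
  ext μ
  constructor
  · intro h
    have hμ : ∀ j, μ ≠ d j := by
      rintro j rfl
      exact not_isEigen_diag a z d hd hz j h
    obtain ⟨k, hk⟩ := exists_mem_gap hd hμ
    refine ⟨k, (strictMonoOn_secular a z d k).injOn (hgap k) hk ?_⟩
    rw [hzero k, (isEigen_iff a z d μ hμ).1 h]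
  · rintro ⟨k, rfl⟩
    exact (isEigen_iff a z d _ (gap_ne (hgap k))).2 (hzero k)
end

section
/- Let n ≥ 2, τ ∈ (0,1), and let H be an n×n real symmetric arrowhead matrix with arrow head α, shaft z = (z_2, …, z_n), and diagonal D = diag(d_2, …, d_n), such that ‖H‖ ≤ 1, d_{i+1} − d_i ≥ τ for all i = 2, …, n−1, and |z_i| ≥ τ for all i = 2, …, n. Let λ_1 < λ_2 < … < λ_n be the eigenvalues of H (which satisfy λ_1 < d_2 < λ_2 < … < d_n < λ_n). Then for every i = 2, …, n−1 one has min{|d_i − λ_i|, |d_{i+1} − λ_i|} ≥ τ³/(n+1), and moreover min{|d_2 − λ_1|, |d_n − λ_n|} ≥ τ³/n. -/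
/-!
An eigenvalue `l` of the arrowhead matrix that avoids every `d k` satisfies the secular equation
`a - l = ∑ k, z k ^ 2 / (d k - l)` (`secular`). The norm bound gives `|a - l| ≤ 2` and
`∑ k, z k ^ 2 ≤ 1`, the second by looking at the first column. By the interlacing hypothesis, no
eigenvalue equals a `d k`, and the signs of the denominators are known.

If `l` is within `δ` of `d p`, the `p`-th term of the sum has size at least `τ ^ 2 / δ`. For an
extreme eigenvalue all terms have the same sign, so `τ ^ 2 / δ ≤ 2`. For an interior one, the terms
of opposite sign sit at distance at least `τ - δ` from `l` by the gap hypothesis, so they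
contribute at most `1 / (τ - δ)`, and `τ ^ 2 / δ ≤ 2 + 1 / (τ - δ)`. This forces `δ ≥ τ ^ 3 / 4`,
which suffices because an interior eigenvalue exists only when `2 ≤ m`.
-/

open Matrix

/-- The spectral norm (largest singular value) of a matrix, i.e. the operator norm
of the induced linear map between Euclidean spaces. -/
noncomputable def specNorm {𝕜 : Type*} [RCLike 𝕜] {p q : Type*} [Fintype p] [Fintype q]
    [DecidableEq q] (A : Matrix p q 𝕜) : ℝ :=
  ‖LinearMap.toContinuousLinearMap (Matrix.toEuclideanLin A)‖

lemma sum_sq_mulVec_le {p : Type*} [Fintype p] [DecidableEq p] (A : Matrix p p ℝ)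
    (hA : specNorm A ≤ 1) (v : p → ℝ) : ∑ i, (A *ᵥ v) i ^ 2 ≤ ∑ i, v i ^ 2 := by
  have h := (LinearMap.toContinuousLinearMap (Matrix.toEuclideanLin A)).le_of_opNorm_le hA
    (WithLp.toLp 2 v)
  rw [one_mul] at h
  have h2 := pow_le_pow_left₀ (norm_nonneg _) h 2
  simpa [EuclideanSpace.norm_sq_eq, Matrix.toLpLin_apply] using h2

lemma arrowhead_mulVec_zero {m : ℕ} (a : ℝ) (z d : Fin m → ℝ) (v : Fin (m + 1) → ℝ) :
    (arrowhead a z d *ᵥ v) 0 = a * v 0 + ∑ k, z k * v k.succ := by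
  simp [Matrix.mulVec, dotProduct, arrowhead, Fin.sum_univ_succ]

lemma arrowhead_mulVec_succ {m : ℕ} (a : ℝ) (z d : Fin m → ℝ) (v : Fin (m + 1) → ℝ) (k : Fin m) :
    (arrowhead a z d *ᵥ v) k.succ = z k * v 0 + d k * v k.succ := by
  simp [Matrix.mulVec, dotProduct, arrowhead, Fin.sum_univ_succ]

/-- The first column of the arrowhead matrix is the image of a unit vector. -/
lemma head_shaft_le {m : ℕ} (a : ℝ) (z d : Fin m → ℝ) (h : specNorm (arrowhead a z d) ≤ 1) :
    a ^ 2 + ∑ k, z k ^ 2 ≤ 1 := by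
  have := sum_sq_mulVec_le _ h (Pi.single 0 1)
  simpa [Fin.sum_univ_succ, arrowhead_mulVec_zero, arrowhead_mulVec_succ, -mulVec_single] using this

lemma exists_eigenvector {p : Type*} [Fintype p] [DecidableEq p] (A : Matrix p p ℝ) (l : ℝ)
    (hl : l ∈ spectrum ℝ A) : ∃ v : p → ℝ, v ≠ 0 ∧ A *ᵥ v = l • v := by
  rw [spectrum.mem_iff, Matrix.isUnit_iff_isUnit_det, isUnit_iff_ne_zero, not_not,
    ← Matrix.exists_mulVec_eq_zero_iff] at hl
  obtain ⟨v, hv, h⟩ := hl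
  refine ⟨v, hv, ?_⟩
  rw [Matrix.sub_mulVec, sub_eq_zero, Algebra.algebraMap_eq_smul_one, Matrix.smul_mulVec,
    Matrix.one_mulVec] at h
  exact h.symm

lemma eigenvalue_sq_le {p : Type*} [Fintype p] [DecidableEq p] (A : Matrix p p ℝ)
    (hA : specNorm A ≤ 1) (l : ℝ) (hl : l ∈ spectrum ℝ A) : l ^ 2 ≤ 1 := by
  obtain ⟨v, hv, h⟩ := exists_eigenvector A l hl
  have h1 := sum_sq_mulVec_le A hA v
  simp only [h, Pi.smul_apply, smul_eq_mul, mul_pow, ← Finset.mul_sum] at h1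
  obtain ⟨i, hi⟩ := Function.ne_iff.mp hv
  have hpos : 0 < ∑ i, v i ^ 2 :=
    Finset.sum_pos' (fun _ _ => sq_nonneg _) ⟨i, Finset.mem_univ _, sq_pos_of_ne_zero hi⟩
  exact le_of_mul_le_mul_right (by linarith) hpos

/-- The secular equation of an arrowhead matrix. -/
lemma secular_s1 {m : ℕ} (a : ℝ) (z d : Fin m → ℝ) (l : ℝ)
    (hl : l ∈ spectrum ℝ (arrowhead a z d)) (hd : ∀ k, d k ≠ l) :
    a - l = ∑ k, z k ^ 2 / (d k - l) := by
  obtain ⟨v, hv, h⟩ := exists_eigenvector _ l hl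
  have hd' : ∀ k, d k - l ≠ 0 := fun k => sub_ne_zero.mpr (hd k)
  have hs : ∀ k : Fin m, v k.succ = -(z k * v 0) / (d k - l) := fun k => by
    have := congrFun h k.succ
    rw [arrowhead_mulVec_succ, Pi.smul_apply, smul_eq_mul] at this
    rw [eq_div_iff (hd' k)]
    linarith
  -- If the head coordinate vanished, so would the whole eigenvector.
  have h0 : v 0 ≠ 0 := fun h0 => hv <| funext <| Fin.cases h0 fun k => by simp [hs, h0]
  have e := congrFun h 0
  rw [arrowhead_mulVec_zero, Pi.smul_apply, smul_eq_mul] at e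
  have e2 : ∑ k, z k * v k.succ = -(v 0 * ∑ k, z k ^ 2 / (d k - l)) := by
    rw [Finset.mul_sum, ← Finset.sum_neg_distrib]
    refine Finset.sum_congr rfl fun k _ => ?_
    rw [hs]
    ring
  rw [e2] at e
  refine mul_left_cancel₀ h0 ?_
  linarith

/-- Lower bound for a positive denominator when all denominators are positive. -/
lemma extreme_bound {m : ℕ} (τ : ℝ) (hτ : 0 < τ) (hτ1 : τ < 1) (z x : Fin m → ℝ) (c : ℝ)
    (hc : c ≤ 2) (hsec : c = ∑ k, z k ^ 2 / x k) (hz : ∀ i, τ ≤ |z i|) (hx : ∀ k, 0 < x k)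
    (p : Fin m) : τ ^ 3 / 2 ≤ x p := by
  have h1 : z p ^ 2 / x p ≤ ∑ k, z k ^ 2 / x k :=
    Finset.single_le_sum (f := fun k => z k ^ 2 / x k)
      (fun k _ => div_nonneg (sq_nonneg _) (hx k).le) (Finset.mem_univ p)
  have h2 : z p ^ 2 ≤ 2 * x p := (div_le_iff₀ (hx p)).mp (by linarith)
  have h3 : τ ^ 2 ≤ z p ^ 2 := by
    rw [← sq_abs (z p)]
    exact pow_le_pow_left₀ hτ.le (hz p) 2
  nlinarith [pow_pos hτ 2]

/-- Lower bound for a positive denominator `x p` when every non-positive denominator lies at least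
`τ` below it. -/
lemma interior_bound {m : ℕ} (τ : ℝ) (hτ : 0 < τ) (hτ1 : τ < 1) (z x : Fin m → ℝ) (c : ℝ)
    (hc : c ≤ 2) (hsec : c = ∑ k, z k ^ 2 / x k) (hz : ∀ i, τ ≤ |z i|)
    (hsum : ∑ k, z k ^ 2 ≤ 1) (p : Fin m) (hp : 0 < x p)
    (hx : ∀ k, 0 < x k ∨ τ ≤ x p - x k) : τ ^ 3 / 4 ≤ x p := by
  by_contra! hlt
  have h3 : τ ^ 2 ≤ z p ^ 2 := by
    rw [← sq_abs (z p)]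
    exact pow_le_pow_left₀ hτ.le (hz p) 2
  have hτ3 : τ ^ 3 ≤ τ := by nlinarith [mul_pos hτ hτ]
  have hterm : ∀ k, -(z k ^ 2 * (4 / (3 * τ))) ≤ z k ^ 2 / x k := fun k => by
    rcases hx k with h | h
    · have h1 : 0 ≤ z k ^ 2 / x k := by positivity
      have h2 : 0 ≤ z k ^ 2 * (4 / (3 * τ)) := by positivity
      linarith
    · have hk : 3 * τ / 4 ≤ -x k := by linarith
      have h1 : 1 / (-x k) ≤ 1 / (3 * τ / 4) := one_div_le_one_div_of_le (by positivity) hk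
      have h2 := mul_le_mul_of_nonneg_left h1 (sq_nonneg (z k))
      have e1 : z k ^ 2 * (1 / (-x k)) = -(z k ^ 2 / x k) := by rw [one_div, inv_neg]; ring
      have e2 : 1 / (3 * τ / 4) = 4 / (3 * τ) := by field_simp
      rw [e1, e2] at h2
      linarith
  have hrest : -(4 / (3 * τ)) ≤ ∑ k ∈ Finset.univ.erase p, z k ^ 2 / x k := by
    have h1 := Finset.sum_le_sum (s := Finset.univ.erase p) fun k _ => hterm k
    rw [Finset.sum_neg_distrib, ← Finset.sum_mul] at h1
    have h2 : ∑ k ∈ Finset.univ.erase p, z k ^ 2 ≤ 1 :=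
      (Finset.sum_le_univ_sum_of_nonneg fun k => sq_nonneg (z k)).trans hsum
    have h4 := mul_le_mul_of_nonneg_right h2 (show 0 ≤ 4 / (3 * τ) by positivity)
    linarith
  rw [← Finset.add_sum_erase _ _ (Finset.mem_univ p)] at hsec
  have hbig : 4 / τ < z p ^ 2 / x p := by
    rw [div_lt_div_iff₀ hτ hp]
    nlinarith
  have h5 : 4 / (3 * τ) = 4 / 3 * (1 / τ) := by field_simp
  have h6 : 4 / τ = 4 * (1 / τ) := by ring
  have h7 : 1 < 1 / τ := one_lt_one_div hτ hτ1
  rw [h5] at hrest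
  rw [h6] at hbig
  linarith

theorem stmt_1 {m : ℕ} (hm : 1 ≤ m) (τ : ℝ) (hτ : τ ∈ Set.Ioo (0 : ℝ) 1)
    (a : ℝ) (z d : Fin m → ℝ)
    (hnorm : specNorm (arrowhead a z d) ≤ 1)
    (hgap : ∀ i j : Fin m, (j : ℕ) = (i : ℕ) + 1 → τ ≤ d j - d i)
    (hz : ∀ i, τ ≤ |z i|)
    (lam : Fin (m + 1) → ℝ) (hmono : StrictMono lam)
    (hspec : spectrum ℝ (arrowhead a z d) = Set.range lam)
    (hinter : ∀ k : Fin m, lam (Fin.castSucc k) < d k ∧ d k < lam (Fin.succ k)) :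
    (∀ t s : Fin m, (s : ℕ) = (t : ℕ) + 1 →
      τ ^ 3 / (m + 2) ≤ min |d t - lam (Fin.castSucc s)| |d s - lam (Fin.castSucc s)|) ∧
    τ ^ 3 / (m + 1) ≤
      min |d ⟨0, by omega⟩ - lam 0| |d ⟨m - 1, by omega⟩ - lam (Fin.last m)| := by
  obtain ⟨hτ0, hτ1⟩ := hτ
  have hhead := head_shaft_le a z d hnorm
  have hzsum : ∑ k, z k ^ 2 ≤ 1 := by nlinarith [sq_nonneg a]
  have ha : |a| ≤ 1 := by
    have : 0 ≤ ∑ k, z k ^ 2 := Finset.sum_nonneg fun k _ => sq_nonneg _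
    exact (sq_le_one_iff_abs_le_one a).mp (by linarith)
  have hmem : ∀ j, lam j ∈ spectrum ℝ (arrowhead a z d) := fun j => hspec ▸ Set.mem_range_self j
  have hl : ∀ j, |lam j| ≤ 1 := fun j =>
    (sq_le_one_iff_abs_le_one _).mp (eigenvalue_sq_le _ hnorm _ (hmem j))
  have hc : ∀ j, a - lam j ≤ 2 ∧ lam j - a ≤ 2 := fun j => by
    have h1 := abs_le.mp ha
    have h2 := abs_le.mp (hl j)
    constructor <;> linarith
  have habove : ∀ (j : Fin (m + 1)) (k : Fin m), (j : ℕ) ≤ k → lam j < d k := fun j k h =>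
    (hmono.monotone (show j ≤ k.castSucc from h)).trans_lt (hinter k).1
  have hbelow : ∀ (j : Fin (m + 1)) (k : Fin m), (k : ℕ) < j → d k < lam j := fun j k h =>
    (hinter k).2.trans_le (hmono.monotone (show k.succ ≤ j from Fin.le_def.mpr (by simpa using h)))
  have hne : ∀ j k, d k ≠ lam j := fun j k => by
    rcases le_or_gt (j : ℕ) k with h | h
    · exact (habove j k h).ne'
    · exact (hbelow j k h).ne
  have hdmono : Monotone d := fun i j hij => by
    rcases hij.eq_or_lt with h | h
    · rw [h]
    · exact ((hbelow j.castSucc i h).trans (hinter j).1).le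
  have hsec := fun j => secular_s1 a z d (lam j) (hmem j) (hne j)
  have hsec' : ∀ j, lam j - a = ∑ k, z k ^ 2 / (lam j - d k) := fun j => by
    rw [← neg_sub, hsec j, ← Finset.sum_neg_distrib]
    refine Finset.sum_congr rfl fun k _ => ?_
    rw [← neg_sub (d k), div_neg]
  have hτ3 := pow_pos hτ0 3
  refine ⟨fun t s hts => ?_, ?_⟩
  · have hg := hgap t s hts
    have hm2 : (2 : ℝ) ≤ m := by
      have := s.isLt
      exact_mod_cast (by omega : 2 ≤ m)
    have hle : τ ^ 3 / (m + 2) ≤ τ ^ 3 / 4 :=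
      div_le_div_of_nonneg_left hτ3.le (by norm_num) (by linarith)
    have h1 := habove s.castSucc s (by simp)
    have h2 := hbelow s.castSucc t (by simp [hts])
    refine hle.trans (le_min ?_ ?_)
    · rw [abs_sub_comm, abs_of_pos (sub_pos.mpr h2)]
      refine interior_bound τ hτ0 hτ1 z (fun k => lam s.castSucc - d k) _ (hc s.castSucc).2
        (hsec' _) hz hzsum t (sub_pos.mpr h2) fun k => ?_
      rcases le_or_gt s k with h | h
      · have := hdmono h
        right
        linarith
      · exact Or.inl (sub_pos.mpr (hbelow _ k h))
    · rw [abs_of_pos (sub_pos.mpr h1)]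
      refine interior_bound τ hτ0 hτ1 z (fun k => d k - lam s.castSucc) _ (hc s.castSucc).1
        (hsec _) hz hzsum s (sub_pos.mpr h1) fun k => ?_
      rcases le_or_gt s k with h | h
      · exact Or.inl (sub_pos.mpr (habove _ k h))
      · have := hdmono (show k ≤ t from Fin.le_def.mpr (by have := Fin.lt_def.mp h; omega))
        right
        linarith
  · have hm1 : (1 : ℝ) ≤ m := by exact_mod_cast hm
    have hle : τ ^ 3 / (m + 1) ≤ τ ^ 3 / 2 :=
      div_le_div_of_nonneg_left hτ3.le (by norm_num) (by linarith)
    have h1 : ∀ k, 0 < d k - lam 0 := fun k => sub_pos.mpr (habove 0 k (by simp))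
    have h2 : ∀ k, 0 < lam (Fin.last m) - d k := fun k => sub_pos.mpr (hbelow _ k (by simp))
    refine hle.trans (le_min ?_ ?_)
    · rw [abs_of_pos (h1 _)]
      exact extreme_bound τ hτ0 hτ1 z (fun k => d k - lam 0) _ (hc 0).1 (hsec 0) hz h1 _
    · rw [abs_sub_comm, abs_of_pos (h2 _)]
      exact extreme_bound τ hτ0 hτ1 z (fun k => lam (Fin.last m) - d k) _ (hc _).2 (hsec' _) hz h2 _
end

section
/- Let n ≥ 2 and let λ̂_1, …, λ̂_n and d_2, …, d_n be real numbers satisfying the strict interlacing λ̂_1 < d_2 < λ̂_2 < d_3 < … < d_n < λ̂_n. For i = 2, …, n define ẑ_i as any real number with ẑ_i² = (d_i − λ̂_1)(λ̂_n − d_i) · Π_{j=2}^{i−1} (λ̂_j − d_i)/(d_j − d_i) · Π_{j=i}^{n−1} (λ̂_j − d_i)/(d_{j+1} − d_i) (this quantity is strictly positive), and set α̂ = λ̂_1 + Σ_{j=2}^n (λ̂_j − d_j). Then the n×n real symmetric arrowhead matrix Ĥ with arrow head α̂, shaft ẑ = (ẑ_2, …, ẑ_n), and diagonal D = diag(d_2,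 …, d_n) has eigenvalues exactly λ̂_1, …, λ̂_n. -/
/-!
The argument compares two monic polynomials of degree `m + 1`: the product `p = ∏ (X - λ_j)` and
the characteristic polynomial of the arrowhead matrix,
`q = (X - α) ∏ (X - d_k) - ∑ k, z_k² ∏_{l ≠ k} (X - d_l)`.
The choice of `α` says that `p` and `q` have the same second coefficient, so `p - q` has degree
less than `m` (`degree_prod_sub_prod_lt`). The formula for `z_k²` says precisely that
`p (d_k) = - z_k² ∏_{l ≠ k} (d_k - d_l) = q (d_k)` (`eval_nodes`). As the `d_k` are `m`
distinct points, `p = q` (`prod_eq_secular`).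

The determinant is never expanded. Strict interlacing gives `z_k² > 0`, so no `d_k` is an eigenvalue
(`not_mem_spectrum_d`); for any other `x`, solving the eigenvector equation shows that `x` is an
eigenvalue if and only if `x - α = ∑ z_k² / (x - d_k)` (`mem_spectrum_iff_secular`), which is
`q x = 0` divided by the nonzero number `∏ (x - d_k)`.
-/

open Matrix

open Finset in
lemma prod_split {m : ℕ} (f : Fin (m + 1) → ℝ) (i : Fin m) :
    ∏ j, f j = f 0 * f (Fin.last m) * (∏ j ∈ univ.filter (fun j => j < i), f (Fin.succ j)) *
      (∏ j ∈ univ.filter (fun j => i < j), f (Fin.castSucc j)) := by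
  have h1 : ∏ j ∈ univ.filter (fun j => j ≤ Fin.castSucc i), f j =
      f 0 * ∏ j ∈ univ.filter (fun j => j < i), f (Fin.succ j) := by
    rw [prod_filter, Fin.prod_univ_succ, prod_filter]
    simp [Fin.succ_le_castSucc_iff]
  have h2 : ∏ j ∈ univ.filter (fun j => ¬ j ≤ Fin.castSucc i), f j =
      (∏ j ∈ univ.filter (fun j => i < j), f (Fin.castSucc j)) * f (Fin.last m) := by
    rw [prod_filter, Fin.prod_univ_castSucc, prod_filter]
    simp
  rw [← prod_filter_mul_prod_filter_not univ (fun j => j ≤ Fin.castSucc i), h1, h2]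
  ring

open Finset in
lemma prod_erase_split {m : ℕ} (g : Fin m → ℝ) (i : Fin m) :
    ∏ j ∈ univ.erase i, g j = (∏ j ∈ univ.filter (fun j => j < i), g j) *
      (∏ j ∈ univ.filter (fun j => i < j), g j) := by
  rw [← prod_union]
  · congr 1
    ext j
    simp
  · rw [disjoint_filter]
    intro j _ h
    exact h.le.not_gt

lemma mem_spectrum_iff_eigenvector {m : ℕ} (a : ℝ) (z d : Fin m → ℝ) (x : ℝ) :
    x ∈ spectrum ℝ (arrowhead a z d) ↔ ∃ (v0 : ℝ) (w : Fin m → ℝ), (v0 ≠ 0 ∨ w ≠ 0) ∧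
      (x - a) * v0 = ∑ k, z k * w k ∧ ∀ k, (x - d k) * w k = z k * v0 := by
  rw [spectrum.mem_iff, Matrix.isUnit_iff_isUnit_det, isUnit_iff_ne_zero, not_not,
    ← Matrix.exists_mulVec_eq_zero_iff]
  have key : ∀ v : Fin (m + 1) → ℝ,
      (algebraMap ℝ (Matrix (Fin (m + 1)) (Fin (m + 1)) ℝ) x - arrowhead a z d) *ᵥ v = 0 ↔
      (x - a) * v 0 = ∑ k, z k * v (Fin.succ k) ∧
        ∀ k, (x - d k) * v (Fin.succ k) = z k * v 0 := by
    intro v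
    rw [Matrix.sub_mulVec, sub_eq_zero, Algebra.algebraMap_eq_smul_one, Matrix.smul_mulVec,
      Matrix.one_mulVec, funext_iff, Fin.forall_fin_succ]
    simp only [Matrix.mulVec, dotProduct, Fin.sum_univ_succ, arrowhead, Matrix.of_apply,
      Fin.cons_zero, Fin.cons_succ, Pi.smul_apply, smul_eq_mul, ite_mul, zero_mul,
      Finset.sum_ite_eq, Finset.mem_univ, if_true]
    refine and_congr ⟨fun h => by linarith, fun h => by linarith⟩
      (forall_congr' fun k => ⟨fun h => by linarith, fun h => by linarith⟩)
  constructor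
  · rintro ⟨v, hv, h⟩
    refine ⟨v 0, fun k => v (Fin.succ k), ?_, (key v).1 h⟩
    by_contra! hc
    apply hv
    ext j
    refine Fin.cases hc.1 (fun k => congrFun hc.2 k) j
  · rintro ⟨v0, w, hne, h⟩
    refine ⟨Fin.cons v0 w, ?_, (key _).2 (by simpa using h)⟩
    intro hc
    rcases hne with h0 | h0
    · exact h0 (by simpa using congrFun hc 0)
    · exact h0 (funext fun k => by simpa using congrFun hc (Fin.succ k))

lemma not_mem_spectrum_d {m : ℕ} (a : ℝ) (z d : Fin m → ℝ) (hd : Function.Injective d)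
    (hz : ∀ k, z k ≠ 0) (i : Fin m) : d i ∉ spectrum ℝ (arrowhead a z d) := by
  rw [mem_spectrum_iff_eigenvector]
  rintro ⟨v0, w, hne, h0, hk⟩
  have hv0 : v0 = 0 := by
    have := hk i
    simpa [hz i] using this.symm
  subst hv0
  have hw : ∀ k, k ≠ i → w k = 0 := by
    intro k hki
    have := hk k
    rw [mul_zero] at this
    exact (mul_eq_zero.1 this).resolve_left (sub_ne_zero.2 fun h => hki (hd h).symm)
  rw [Finset.sum_eq_single i (fun k _ hki => by rw [hw k hki, mul_zero]) (by simp), mul_zero] at h0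
  have hwi : w i = 0 := (mul_eq_zero.1 h0.symm).resolve_left (hz i)
  rcases hne with h | h
  · exact h rfl
  · refine h (funext fun k => ?_)
    by_cases hki : k = i
    · rw [hki]; exact hwi
    · exact hw k hki

/-- The secular equation: away from the `d k`, an eigenvector is determined by its head entry. -/
lemma mem_spectrum_iff_secular {m : ℕ} (a : ℝ) (z d : Fin m → ℝ) (x : ℝ) (hx : ∀ k, x ≠ d k) :
    x ∈ spectrum ℝ (arrowhead a z d) ↔ x - a = ∑ k, z k ^ 2 / (x - d k) := by
  rw [mem_spectrum_iff_eigenvector]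
  have hx' : ∀ k, x - d k ≠ 0 := fun k => sub_ne_zero.2 (hx k)
  constructor
  · rintro ⟨v0, w, hne, h0, hk⟩
    have hw : ∀ k, w k = z k * v0 / (x - d k) := fun k => by
      rw [eq_div_iff (hx' k), ← hk k, mul_comm]
    have hv0 : v0 ≠ 0 := by
      rintro rfl
      rcases hne with h | h
      · exact h rfl
      · exact h (funext fun k => by simp [hw k])
    apply mul_right_cancel₀ hv0
    rw [h0, Finset.sum_mul]
    refine Finset.sum_congr rfl fun k _ => ?_
    rw [hw k]
    ring
  · intro h
    refine ⟨1, fun k => z k / (x - d k), Or.inl one_ne_zero, ?_, fun k => ?_⟩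
    · rw [mul_one, h]
      refine Finset.sum_congr rfl fun k _ => ?_
      ring
    · rw [mul_one, mul_div_cancel₀ _ (hx' k)]

open Polynomial in
/-- Equal sums make the two highest coefficients agree. -/
lemma degree_prod_sub_prod_lt {m : ℕ} (a b : Fin (m + 1) → ℝ) (h : ∑ i, a i = ∑ i, b i) :
    (∏ i, (X - C (a i)) - ∏ i, (X - C (b i))).degree < (m : WithBot ℕ) := by
  rw [degree_lt_iff_coeff_zero]
  intro n hn
  rw [coeff_sub, sub_eq_zero]
  have hdeg : ∀ c : Fin (m + 1) → ℝ, (∏ i, (X - C (c i))).natDegree = m + 1 := fun c => by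
    rw [natDegree_finsetProd_X_sub_C_eq_card]; simp
  have hmon : ∀ c : Fin (m + 1) → ℝ, (∏ i, (X - C (c i))).Monic := fun c =>
    monic_prod_of_monic _ _ fun i _ => monic_X_sub_C _
  rcases hn.eq_or_lt with rfl | hn
  · have hc : ∀ c : Fin (m + 1) → ℝ, (∏ i, (X - C (c i))).coeff m = - ∑ i, c i := fun c => by
      simpa using prod_X_sub_C_coeff_card_pred (Finset.univ : Finset (Fin (m + 1))) c (by simp)
    rw [hc, hc, h]
  · rcases (Nat.succ_le_of_lt hn).eq_or_lt with rfl | hn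
    · have hc : ∀ c : Fin (m + 1) → ℝ, (∏ i, (X - C (c i))).coeff (m + 1) = 1 := fun c => by
        have := (hmon c).coeff_natDegree
        rwa [hdeg c] at this
      exact (hc a).trans (hc b).symm
    · rw [coeff_eq_zero_of_natDegree_lt, coeff_eq_zero_of_natDegree_lt] <;> rw [hdeg] <;> exact hn

open Polynomial in
/-- Interpolation: a monic `∏ (x - l j)` of degree `m + 1` is determined by `∑ l j` and its values
at the `m` distinct points `d k`; here those are encoded by `a` and `z`. -/
lemma prod_eq_secular {m : ℕ} (a : ℝ) (z d : Fin m → ℝ) (l : Fin (m + 1) → ℝ)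
    (hd : Function.Injective d) (hsum : ∑ j, l j = a + ∑ k, d k)
    (hval : ∀ k, ∏ j, (d k - l j) = - (z k ^ 2 * ∏ i ∈ Finset.univ.erase k, (d k - d i))) (x : ℝ) :
    ∏ j, (x - l j) = (x - a) * ∏ k, (x - d k)
      - ∑ k, z k ^ 2 * ∏ i ∈ Finset.univ.erase k, (x - d i) := by
  have h1 : (∏ j, (X - C (l j)) - ∏ j, (X - C ((Fin.cons a d : Fin (m + 1) → ℝ) j))).degree < (m : WithBot ℕ) :=
    degree_prod_sub_prod_lt _ _ (by rw [hsum, Fin.sum_univ_succ]; simp)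
  have h2 : (-∑ k, C (z k ^ 2) * ∏ i ∈ Finset.univ.erase k, (X - C (d i))).degree < (m : WithBot ℕ) := by
    rw [degree_neg]
    refine (degree_sum_le _ _).trans_lt ((Finset.sup_lt_iff (WithBot.bot_lt_coe m)).2 ?_)
    intro k _
    rw [← smul_eq_C_mul]
    refine (degree_smul_le _ _).trans_lt ?_
    rw [degree_prod]
    simp only [degree_X_sub_C, Finset.sum_const, nsmul_eq_mul, mul_one]
    have : (Finset.univ.erase k).card < m := by
      simpa using Finset.card_erase_lt_of_mem (Finset.mem_univ k)
    exact WithBot.coe_lt_coe.2 this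
  have h3 := eq_of_degrees_lt_of_eval_index_eq (v := d) Finset.univ hd.injOn
    (by rw [Finset.card_univ, Fintype.card_fin]; exact h1)
    (by rw [Finset.card_univ, Fintype.card_fin]; exact h2) (fun k _ => by
      rw [eval_sub, eval_neg, eval_finsetSum, eval_prod, eval_prod, Fin.prod_univ_succ (n := m)
        (fun j => eval (d k) (X - C ((Fin.cons a d : Fin (m + 1) → ℝ) j))),
        Finset.prod_eq_zero (i := k) (Finset.mem_univ k) (by simp), mul_zero, sub_zero,
        Finset.sum_eq_single k]
      · simpa [eval_prod] using hval k
      · intro j _ hjk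
        rw [eval_mul, eval_prod, Finset.prod_eq_zero (i := k) (by simp [hjk.symm]) (by simp),
          mul_zero]
      · simp)
  have h4 := congrArg (eval x) h3
  simp only [eval_sub, eval_neg, eval_finsetSum, eval_prod, eval_mul, eval_X, eval_C,
    Fin.prod_univ_succ (n := m) (fun j => x - (Fin.cons a d : Fin (m + 1) → ℝ) j),
    Fin.cons_zero, Fin.cons_succ] at h4
  linarith

/-- The formula prescribed for `z k ^ 2`, cleared of denominators. -/
lemma eval_nodes {m : ℕ} (l : Fin (m + 1) → ℝ) (d : Fin m → ℝ) (hd : Function.Injective d)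
    (i : Fin m) :
    ∏ j, (d i - l j) = - ((d i - l 0) * (l (Fin.last m) - d i) *
        (∏ j ∈ Finset.univ.filter (fun j => j < i), (l (Fin.succ j) - d i) / (d j - d i)) *
        (∏ j ∈ Finset.univ.filter (fun j => i < j), (l (Fin.castSucc j) - d i) / (d j - d i)) *
        ∏ j ∈ Finset.univ.erase i, (d i - d j)) := by
  have hflip : ∀ u v w : ℝ, (u - w) / (v - w) = (w - u) / (w - v) := fun u v w => by
    rw [← neg_sub w u, ← neg_sub w v, neg_div_neg_eq]
  have hL : ∏ j ∈ Finset.univ.filter (fun j => j < i), (d i - d j) ≠ 0 :=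
    Finset.prod_ne_zero_iff.2 fun j hj => sub_ne_zero.2 fun h => by
      have := hd h
      simp_all
  have hR : ∏ j ∈ Finset.univ.filter (fun j => i < j), (d i - d j) ≠ 0 :=
    Finset.prod_ne_zero_iff.2 fun j hj => sub_ne_zero.2 fun h => by
      have := hd h
      simp_all
  simp only [hflip, Finset.prod_div_distrib]
  rw [prod_split (fun j => d i - l j) i, prod_erase_split]
  field_simp
  ring

theorem stmt_3 {m : ℕ} (hm : 1 ≤ m) (lamh : Fin (m + 1) → ℝ) (d : Fin m → ℝ)
    (hinter : ∀ k : Fin m, lamh (Fin.castSucc k) < d k ∧ d k < lamh (Fin.succ k))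
    (zh : Fin m → ℝ)
    (hzh : ∀ i : Fin m, zh i ^ 2 =
      (d i - lamh 0) * (lamh (Fin.last m) - d i) *
        (∏ j ∈ Finset.univ.filter (fun j => j < i),
          (lamh (Fin.succ j) - d i) / (d j - d i)) *
        (∏ j ∈ Finset.univ.filter (fun j => i < j),
          (lamh (Fin.castSucc j) - d i) / (d j - d i))) :
    (∀ i : Fin m, 0 <
      (d i - lamh 0) * (lamh (Fin.last m) - d i) *
        (∏ j ∈ Finset.univ.filter (fun j => j < i),
          (lamh (Fin.succ j) - d i) / (d j - d i)) *
        (∏ j ∈ Finset.univ.filter (fun j => i < j),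
          (lamh (Fin.castSucc j) - d i) / (d j - d i))) ∧
    spectrum ℝ (arrowhead (lamh 0 + ∑ j : Fin m, (lamh (Fin.succ j) - d j)) zh d)
      = Set.range lamh := by
  have hmono : StrictMono lamh :=
    Fin.strictMono_iff_lt_succ.2 fun k => (hinter k).1.trans (hinter k).2
  have hdl : ∀ {j i : Fin m}, j < i → lamh (Fin.succ j) < d i := fun {j i} h =>
    (hmono.monotone (Fin.succ_le_castSucc_iff.2 h)).trans_lt (hinter i).1
  have hdu : ∀ {j i : Fin m}, i < j → d i < lamh (Fin.castSucc j) := fun {j i} h =>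
    (hinter i).2.trans_le (hmono.monotone (Fin.succ_le_castSucc_iff.2 h))
  have hdmono : StrictMono d := fun j i h => (hinter j).2.trans (hdl h)
  have hpos : ∀ i : Fin m, 0 <
      (d i - lamh 0) * (lamh (Fin.last m) - d i) *
        (∏ j ∈ Finset.univ.filter (fun j => j < i),
          (lamh (Fin.succ j) - d i) / (d j - d i)) *
        (∏ j ∈ Finset.univ.filter (fun j => i < j),
          (lamh (Fin.castSucc j) - d i) / (d j - d i)) := by
    intro i
    refine mul_pos (mul_pos (mul_pos ?_ ?_) (Finset.prod_pos fun j hj => ?_))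
      (Finset.prod_pos fun j hj => ?_)
    · exact sub_pos.2 ((hmono.monotone (Fin.zero_le _)).trans_lt (hinter i).1)
    · exact sub_pos.2 ((hinter i).2.trans_le (hmono.monotone (Fin.le_last _)))
    · have h := (Finset.mem_filter.1 hj).2
      exact div_pos_of_neg_of_neg (sub_neg.2 (hdl h)) (sub_neg.2 (hdmono h))
    · have h := (Finset.mem_filter.1 hj).2
      exact div_pos (sub_pos.2 (hdu h)) (sub_pos.2 (hdmono h))
  refine ⟨hpos, ?_⟩
  have hz : ∀ k, zh k ≠ 0 := fun k h => by
    have := hpos k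
    rw [← hzh k, h] at this
    simp at this
  set a := lamh 0 + ∑ j : Fin m, (lamh (Fin.succ j) - d j) with ha
  have hpoly := prod_eq_secular a zh d lamh hdmono.injective
    (by rw [ha, Fin.sum_univ_succ, Finset.sum_sub_distrib]; ring)
    (fun k => by rw [hzh k]; exact eval_nodes lamh d hdmono.injective k)
  ext x
  by_cases hx : ∃ k, x = d k
  · obtain ⟨k, rfl⟩ := hx
    refine iff_of_false (not_mem_spectrum_d a zh d hdmono.injective hz k) ?_
    rintro ⟨j, hj⟩
    -- `d k` lies strictly between two consecutive values of the increasing sequence `lamh`.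
    have h1 := hmono.lt_iff_lt.1 ((hinter k).1.trans_eq hj.symm)
    have h2 := hmono.lt_iff_lt.1 (hj.trans_lt (hinter k).2)
    exact absurd (Fin.castSucc_lt_iff_succ_le.1 h1) h2.not_ge
  · push Not at hx
    have hx' : ∀ k, x - d k ≠ 0 := fun k => sub_ne_zero.2 (hx k)
    have hP : ∏ k, (x - d k) ≠ 0 := Finset.prod_ne_zero_iff.2 fun k _ => hx' k
    have hfac : ∏ j, (x - lamh j) =
        (x - a - ∑ k, zh k ^ 2 / (x - d k)) * ∏ k, (x - d k) := by
      rw [hpoly x, sub_mul _ (∑ k, _), Finset.sum_mul]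
      congr 1
      refine Finset.sum_congr rfl fun k _ => ?_
      rw [← Finset.mul_prod_erase _ _ (Finset.mem_univ k), ← mul_assoc, div_mul_cancel₀ _ (hx' k)]
    have hroot : x ∈ Set.range lamh ↔ ∏ j, (x - lamh j) = 0 := by
      rw [Finset.prod_eq_zero_iff]
      simp [sub_eq_zero, eq_comm]
    rw [mem_spectrum_iff_secular a zh d x hx, hroot, hfac, mul_eq_zero, or_iff_left hP, sub_eq_zero]
end

section
/- Let n ≥ 2, τ ∈ (0,1), ε_z ∈ (0, 1/2). Let q_1 ∈ ℝ with |q_1| ≤ 1, and for k = 2, …, n let ζ_k, q_k, ε_k be reals such that |ε_k| ≤ ε_z for all k, |ζ_k q_k| ≤ 2(n+1)/τ³ for all k, and Σ_{k=2}^n ζ_k² ≤ 4(n+1)²/τ⁶. Define u = (−q_1 + Σ_{k=2}^n ζ_k q_k) / √(1 + Σ_{k=2}^n ζ_k²) and u' = (−q_1 + Σ_{k=2}^n (1+ε_k) ζ_k q_k) / √(1 + Σ_{k=2}^n (1+ε_k)² ζ_k²). Then |u − u'| ≤ 48 ε_z (n+1)² / τ⁶. -/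
/-!
Write `u = A / S` and `u' = A' / S'`. Each factor `1 + ε k` lies in `[1 - εz, 1 + εz]`, so
`(1 - εz) * S ≤ S' ≤ (1 + εz) * S`, that is `|S' - S| ≤ εz * S`: the denominator has relative
error at most `εz`. With `L = 2 * (m + 2) / τ ^ 3`, the numerators satisfy `|A - A'| ≤ εz * m * L`
and `|A| ≤ 1 + m * L`. Since `S' ≥ 1`,
`u - u' = (A - A') / S' + (A / S') * ((S' - S) / S)` gives `|u - u'| ≤ εz * (1 + 2 * m * L)`,
which is at most `5 * εz * (m + 2) ^ 2 / τ ^ 6`.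
-/

/-- A quotient whose denominator is at least `1` after perturbation and changes by a relative
error at most `e` moves by at most the numerator error plus `e` times the numerator. -/
lemma abs_div_sub_div_le {A A' S S' e : ℝ} (hS : 0 < S) (hS' : 1 ≤ S')
    (h : |S' - S| ≤ e * S) : |A / S - A' / S'| ≤ |A - A'| + e * |A| := by
  have hS'0 : 0 < S' := by linarith
  have key : A / S - A' / S' = ((A - A') + A * ((S' - S) / S)) / S' := by
    field_simp
    ring
  have h1 : |(S' - S) / S| ≤ e := by
    rw [abs_div, abs_of_pos hS, div_le_iff₀ hS]
    exact h
  rw [key, abs_div, abs_of_pos hS'0]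
  refine (div_le_self (abs_nonneg _) hS').trans ((abs_add_le _ _).trans ?_)
  rw [abs_mul, mul_comm e]
  gcongr

/-- The denominator has relative error at most `e`: squaring reduces this to
`(1 - e) ^ 2 ≤ (1 + ε k) ^ 2 ≤ (1 + e) ^ 2` termwise, the summand `1` being harmless since
`(1 - e) ^ 2 ≤ 1 ≤ (1 + e) ^ 2`. -/
lemma abs_sqrt_sub_sqrt_le {m : ℕ} {e : ℝ} (he : 0 ≤ e) (he1 : e ≤ 1) (ζ ε : Fin m → ℝ)
    (hε : ∀ k, |ε k| ≤ e) :
    |Real.sqrt (1 + ∑ k, (1 + ε k) ^ 2 * ζ k ^ 2) - Real.sqrt (1 + ∑ k, ζ k ^ 2)|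
      ≤ e * Real.sqrt (1 + ∑ k, ζ k ^ 2) := by
  have hZ : 0 ≤ ∑ k, ζ k ^ 2 := Finset.sum_nonneg fun k _ => sq_nonneg _
  have hup : ∑ k, (1 + ε k) ^ 2 * ζ k ^ 2 ≤ (1 + e) ^ 2 * ∑ k, ζ k ^ 2 := by
    rw [Finset.mul_sum]
    refine Finset.sum_le_sum fun k _ => mul_le_mul_of_nonneg_right ?_ (sq_nonneg _)
    have := abs_le.1 (hε k)
    exact pow_le_pow_left₀ (by linarith) (by linarith) 2
  have hlo : (1 - e) ^ 2 * ∑ k, ζ k ^ 2 ≤ ∑ k, (1 + ε k) ^ 2 * ζ k ^ 2 := by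
    rw [Finset.mul_sum]
    refine Finset.sum_le_sum fun k _ => mul_le_mul_of_nonneg_right ?_ (sq_nonneg _)
    have := abs_le.1 (hε k)
    exact pow_le_pow_left₀ (by linarith) (by linarith) 2
  have h1 : Real.sqrt (1 + ∑ k, (1 + ε k) ^ 2 * ζ k ^ 2)
      ≤ (1 + e) * Real.sqrt (1 + ∑ k, ζ k ^ 2) := by
    refine Real.sqrt_le_iff.2 ⟨by positivity, ?_⟩
    rw [mul_pow, Real.sq_sqrt (by linarith)]
    nlinarith
  have h2 : (1 - e) * Real.sqrt (1 + ∑ k, ζ k ^ 2)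
      ≤ Real.sqrt (1 + ∑ k, (1 + ε k) ^ 2 * ζ k ^ 2) := by
    refine Real.le_sqrt_of_sq_le ?_
    rw [mul_pow, Real.sq_sqrt (by linarith)]
    nlinarith
  rw [abs_le]
  constructor <;> linarith

theorem stmt_7 {m : ℕ} (hm : 1 ≤ m) (τ εz : ℝ)
    (hτ : τ ∈ Set.Ioo (0 : ℝ) 1) (hεz : εz ∈ Set.Ioo (0 : ℝ) (1 / 2))
    (q1 : ℝ) (hq1 : |q1| ≤ 1)
    (ζ q ε : Fin m → ℝ)
    (hε : ∀ k, |ε k| ≤ εz)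
    (hζq : ∀ k, |ζ k * q k| ≤ 2 * (m + 2) / τ ^ 3)
    (hζ : ∑ k, ζ k ^ 2 ≤ 4 * (m + 2) ^ 2 / τ ^ 6) :
    |(-q1 + ∑ k, ζ k * q k) / Real.sqrt (1 + ∑ k, ζ k ^ 2) -
        (-q1 + ∑ k, (1 + ε k) * ζ k * q k) /
          Real.sqrt (1 + ∑ k, (1 + ε k) ^ 2 * ζ k ^ 2)|
      ≤ 48 * εz * (m + 2) ^ 2 / τ ^ 6 := by
  obtain ⟨hτ0, hτ1⟩ := hτ
  obtain ⟨he0, he1⟩ := hεz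
  have hZ : 0 ≤ ∑ k, ζ k ^ 2 := Finset.sum_nonneg fun k _ => sq_nonneg _
  have hZ' : 0 ≤ ∑ k, (1 + ε k) ^ 2 * ζ k ^ 2 := Finset.sum_nonneg fun k _ => by positivity
  refine (abs_div_sub_div_le (Real.sqrt_pos.2 (by linarith))
    (Real.one_le_sqrt.2 (by linarith))
    (abs_sqrt_sub_sqrt_le he0.le (by linarith) ζ ε hε)).trans ?_
  have hA : |-q1 + ∑ k, ζ k * q k| ≤ 1 + m * (2 * (m + 2) / τ ^ 3) := by
    refine (abs_add_le _ _).trans (add_le_add (by rwa [abs_neg]) ?_)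
    refine (Finset.abs_sum_le_sum_abs _ _).trans ?_
    refine (Finset.sum_le_sum fun k _ => hζq k).trans ?_
    simp
  have hD : |(-q1 + ∑ k, ζ k * q k) - (-q1 + ∑ k, (1 + ε k) * ζ k * q k)|
      ≤ m * (εz * (2 * (m + 2) / τ ^ 3)) := by
    rw [add_sub_add_left_eq_sub, ← Finset.sum_sub_distrib]
    refine (Finset.abs_sum_le_sum_abs _ _).trans ?_
    have : ∀ k ∈ Finset.univ, |ζ k * q k - (1 + ε k) * ζ k * q k|
        ≤ εz * (2 * (m + 2) / τ ^ 3) := fun k _ => by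
      rw [show ζ k * q k - (1 + ε k) * ζ k * q k = -(ε k * (ζ k * q k)) by ring, abs_neg, abs_mul]
      exact mul_le_mul (hε k) (hζq k) (abs_nonneg _) he0.le
    refine (Finset.sum_le_sum this).trans ?_
    simp
  have hpow : τ ^ 6 ≤ τ ^ 3 := pow_le_pow_of_le_one hτ0.le hτ1.le (by norm_num)
  have hL : 2 * ((m : ℝ) + 2) / τ ^ 3 ≤ 2 * (m + 2) / τ ^ 6 := by gcongr
  have hone : 1 ≤ 1 / τ ^ 6 := by
    rw [le_div_iff₀ (by positivity), one_mul]
    exact pow_le_one₀ hτ0.le hτ1.le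
  have hm0 : (0 : ℝ) ≤ m := Nat.cast_nonneg m
  calc _ ≤ m * (εz * (2 * (m + 2) / τ ^ 3)) + εz * (1 + m * (2 * (m + 2) / τ ^ 3)) := by gcongr
    _ = εz * (1 + 2 * m * (2 * (m + 2) / τ ^ 3)) := by ring
    _ ≤ εz * (1 / τ ^ 6 + 2 * m * (2 * (m + 2) / τ ^ 6)) := by gcongr
    _ = εz * (1 + 4 * m * (m + 2)) / τ ^ 6 := by ring
    _ ≤ εz * (48 * (m + 2) ^ 2) / τ ^ 6 := by
      gcongr
      nlinarith
    _ = 48 * εz * (m + 2) ^ 2 / τ ^ 6 := by ring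
end

section
/- Let δ ∈ [0,1), let A, E_A, R ∈ ℂ^{m×n}, and let Q, E_Q ∈ ℂ^{m×m} be such that Q + E_Q is unitary, (Q + E_Q)* (A + E_A) = R, ‖E_Q‖ ≤ δ, and ‖E_A‖ ≤ δ ‖A‖. Then: (i) ‖R‖ ≤ (1+δ) ‖A‖; (ii) ‖Q‖ ≤ 1+δ; (iii) ‖A − Q R‖ ≤ δ(2+δ) ‖A‖; (iv) ‖Q Q* − I‖ ≤ δ(2+δ) and ‖Q* Q − I‖ ≤ δ(2+δ); (v) every singular value of Q is at least 1−δ, so Q is invertible with ‖Q^{−1}‖ ≤ 1/(1−δ). -/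
/-!
Write `W = Q + EQ`, a unitary matrix, so that `‖W‖ ≤ 1`, `R = Wᴴ (A + EA)` and `A + EA = W R`.
The first four estimates are the triangle inequality and submultiplicativity applied to
* `A - Q R = EQ R - EA`,
* `Q Qᴴ - 1 = EQ EQᴴ - W EQᴴ - EQ Wᴴ`, and similarly for `Qᴴ Q - 1`.

For the last part, `Wᴴ Q = 1 - Wᴴ EQ` is invertible by the Neumann series because `‖Wᴴ EQ‖ ≤ δ < 1`,
hence so is `Q`. The inverse satisfies `Q⁻¹ = Wᴴ + Wᴴ EQ Q⁻¹`, so `‖Q⁻¹‖ ≤ 1 + δ ‖Q⁻¹‖`.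
Finally, `σ² - Qᴴ Q = -(Qᴴ Q) (1 - σ² Q⁻¹ (Q⁻¹)ᴴ)` is invertible as soon as `σ ‖Q⁻¹‖ < 1`, which
bounds the singular values from below.
-/

open Matrix

/-- `σ` is a singular value of the complex square matrix `A`, i.e. `σ ≥ 0` and `σ²`
is an eigenvalue of `Aᴴ A`. -/
def IsSingularValue {p : ℕ} (A : Matrix (Fin p) (Fin p) ℂ) (σ : ℝ) : Prop :=
  0 ≤ σ ∧ ((σ : ℂ) ^ 2) ∈ spectrum ℂ (Aᴴ * A)

open scoped Matrix.Norms.L2Operator in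
/-- The spectral norm is Mathlib's L2 operator norm on matrices, so that the C⋆-algebra API
applies. -/
lemma specNorm_eq_norm {m n : ℕ} (A : Matrix (Fin m) (Fin n) ℂ) : specNorm A = ‖A‖ := by
  rw [Matrix.l2_opNorm_def]; rfl

open scoped Matrix.Norms.L2Operator in
/-- Only `≤` holds in general: in dimension zero the norm is `0`. -/
lemma l2_norm_le_one_of_isometry {m : ℕ} {W : Matrix (Fin m) (Fin m) ℂ} (hW : Wᴴ * W = 1) :
    ‖W‖ ≤ 1 := by
  have h1 := Matrix.l2_opNorm_conjTranspose_mul_self (1 : Matrix (Fin m) (Fin m) ℂ)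
  have h2 := Matrix.l2_opNorm_conjTranspose_mul_self W
  rw [conjTranspose_one, one_mul] at h1
  rw [hW] at h2
  have h3 : ‖(1 : Matrix (Fin m) (Fin m) ℂ)‖ ≤ 1 := by
    by_contra! h
    nlinarith
  by_contra! h
  nlinarith

open scoped Matrix.Norms.L2Operator in
/-- If `σ ‖Q⁻¹‖ < 1` then `σ² - Qᴴ Q` is invertible, by the Neumann series for
`1 - σ² Q⁻¹ (Q⁻¹)ᴴ`. -/
lemma one_le_mul_norm_inv_of_isSingularValue {m : ℕ} {Q : Matrix (Fin m) (Fin m) ℂ}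
    (hQ : IsUnit Q) {σ : ℝ} (hσ : IsSingularValue Q σ) : 1 ≤ σ * ‖Q⁻¹‖ := by
  obtain ⟨h0, hs⟩ := hσ
  by_contra! hlt
  refine spectrum.mem_iff.mp hs ?_
  have hdet : IsUnit Q.det := (Matrix.isUnit_iff_isUnit_det Q).mp hQ
  have hX : Q * Q⁻¹ = 1 := Matrix.mul_nonsing_inv Q hdet
  have hXH : Qᴴ * (Q⁻¹)ᴴ = 1 := by
    rw [← conjTranspose_mul, Matrix.nonsing_inv_mul Q hdet, conjTranspose_one]
  have hnorm : ‖((σ : ℂ) ^ 2) • (Q⁻¹ * (Q⁻¹)ᴴ)‖ < 1 := by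
    have h1 : ‖Q⁻¹ * (Q⁻¹)ᴴ‖ ≤ ‖Q⁻¹‖ * ‖Q⁻¹‖ := by
      simpa only [Matrix.l2_opNorm_conjTranspose] using Matrix.l2_opNorm_mul Q⁻¹ (Q⁻¹)ᴴ
    have h2 : ‖((σ : ℂ) ^ 2)‖ = σ ^ 2 := by
      rw [norm_pow, Complex.norm_real, Real.norm_of_nonneg h0]
    have h3 : 0 ≤ σ * ‖Q⁻¹‖ := by positivity
    rw [norm_smul, h2]
    calc σ ^ 2 * ‖Q⁻¹ * (Q⁻¹)ᴴ‖ ≤ σ ^ 2 * (‖Q⁻¹‖ * ‖Q⁻¹‖) := by gcongr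
      _ = (σ * ‖Q⁻¹‖) * (σ * ‖Q⁻¹‖) := by ring
      _ < 1 := by nlinarith
  have hprod : Qᴴ * Q * (Q⁻¹ * (Q⁻¹)ᴴ) = 1 := by
    rw [Matrix.mul_assoc, ← Matrix.mul_assoc Q, hX, Matrix.one_mul, hXH]
  have hfac : algebraMap ℂ (Matrix (Fin m) (Fin m) ℂ) ((σ : ℂ) ^ 2) - Qᴴ * Q
      = -(Qᴴ * Q * (1 - ((σ : ℂ) ^ 2) • (Q⁻¹ * (Q⁻¹)ᴴ))) := by
    rw [Matrix.mul_sub, Matrix.mul_one, Matrix.mul_smul, hprod, Algebra.algebraMap_eq_smul_one]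
    abel
  have hQH : IsUnit Qᴴ := hQ.star
  rw [hfac]
  exact ((hQH.mul hQ).mul (isUnit_one_sub_of_norm_lt_one hnorm)).neg

open scoped Matrix.Norms.L2Operator in
theorem stmt_9 {M N : ℕ} (δ : ℝ) (hδ : δ ∈ Set.Ico (0 : ℝ) 1)
    (A EA R : Matrix (Fin M) (Fin N) ℂ) (Q EQ : Matrix (Fin M) (Fin M) ℂ)
    (hUnit : (Q + EQ)ᴴ * (Q + EQ) = 1)
    (hQR : (Q + EQ)ᴴ * (A + EA) = R)
    (hEQ : specNorm EQ ≤ δ) (hEA : specNorm EA ≤ δ * specNorm A) :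
    specNorm R ≤ (1 + δ) * specNorm A ∧
    specNorm Q ≤ 1 + δ ∧
    specNorm (A - Q * R) ≤ δ * (2 + δ) * specNorm A ∧
    specNorm (Q * Qᴴ - 1) ≤ δ * (2 + δ) ∧
    specNorm (Qᴴ * Q - 1) ≤ δ * (2 + δ) ∧
    (∀ σ : ℝ, IsSingularValue Q σ → 1 - δ ≤ σ) ∧
    IsUnit Q ∧
    specNorm Q⁻¹ ≤ 1 / (1 - δ) := by
  obtain ⟨hδ0, hδ1⟩ := hδ
  simp only [specNorm_eq_norm] at *
  obtain ⟨W, hWdef⟩ : ∃ W, W = Q + EQ := ⟨_, rfl⟩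
  rw [← hWdef] at hUnit hQR
  have hQ : Q = W - EQ := by rw [hWdef]; abel
  have hUnit' : W * Wᴴ = 1 := mul_eq_one_comm.mp hUnit
  have hW : ‖W‖ ≤ 1 := l2_norm_le_one_of_isometry hUnit
  have hWH : ‖Wᴴ‖ ≤ 1 := by rwa [Matrix.l2_opNorm_conjTranspose]
  have hEH : ‖EQᴴ‖ ≤ δ := by rwa [Matrix.l2_opNorm_conjTranspose]
  have hA := norm_nonneg A
  have hR : ‖R‖ ≤ (1 + δ) * ‖A‖ := by
    rw [← hQR]
    calc ‖Wᴴ * (A + EA)‖ ≤ ‖Wᴴ‖ * ‖A + EA‖ := Matrix.l2_opNorm_mul _ _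
      _ ≤ 1 * (‖A‖ + δ * ‖A‖) := by
        gcongr
        exact (norm_add_le _ _).trans (by gcongr)
      _ = (1 + δ) * ‖A‖ := by ring
  have hresid : A - Q * R = EQ * R - EA := by
    have h : W * R = A + EA := by
      rw [← hQR, ← Matrix.mul_assoc, hUnit', Matrix.one_mul]
    rw [hQ, Matrix.sub_mul, h]
    abel
  -- Both products `Q Qᴴ - 1` and `Qᴴ Q - 1` expand to `E Eᴴ - V Eᴴ - E Vᴴ` with `‖V‖ ≤ 1`,
  -- taking `(V, E)` to be `(W, EQ)` or `(Wᴴ, EQᴴ)`.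
  have hdefect : ∀ V V' E E' : Matrix (Fin M) (Fin M) ℂ, ‖V‖ ≤ 1 → ‖V'‖ ≤ 1 → ‖E‖ ≤ δ →
      ‖E'‖ ≤ δ → V * V' = 1 → ‖(V - E) * (V' - E') - 1‖ ≤ δ * (2 + δ) := by
    intro V V' E E' hV hV' hE hE' hVV
    have h : (V - E) * (V' - E') - 1 = E * E' - V * E' - E * V' := by
      rw [← hVV]; noncomm_ring
    rw [h]
    calc ‖E * E' - V * E' - E * V'‖ ≤ ‖E * E'‖ + ‖V * E'‖ + ‖E * V'‖ :=
          (norm_sub_le _ _).trans (by gcongr; exact norm_sub_le _ _)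
      _ ≤ ‖E‖ * ‖E'‖ + ‖V‖ * ‖E'‖ + ‖E‖ * ‖V'‖ := by
        gcongr <;> exact Matrix.l2_opNorm_mul _ _
      _ ≤ δ * δ + 1 * δ + δ * 1 := by gcongr
      _ = δ * (2 + δ) := by ring
  have hF : ‖Wᴴ * EQ‖ ≤ δ :=
    calc ‖Wᴴ * EQ‖ ≤ ‖Wᴴ‖ * ‖EQ‖ := Matrix.l2_opNorm_mul _ _
      _ ≤ 1 * δ := by gcongr
      _ = δ := one_mul δ
  have hWQ : Wᴴ * Q = 1 - Wᴴ * EQ := by rw [hQ, Matrix.mul_sub, hUnit]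
  have hQunit : IsUnit Q := by
    have hfac : Q = W * (1 - Wᴴ * EQ) := by
      rw [← hWQ, ← Matrix.mul_assoc, hUnit', Matrix.one_mul]
    rw [hfac]
    exact (IsUnit.of_mul_eq_one _ hUnit').mul (isUnit_one_sub_of_norm_lt_one (hF.trans_lt hδ1))
  have hpos : 0 < 1 - δ := by linarith
  have hinv : ‖Q⁻¹‖ ≤ 1 / (1 - δ) := by
    have hX : Q * Q⁻¹ = 1 :=
      Matrix.mul_nonsing_inv Q ((Matrix.isUnit_iff_isUnit_det Q).mp hQunit)
    have hfix : Q⁻¹ = Wᴴ + Wᴴ * EQ * Q⁻¹ := by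
      have h : (1 - Wᴴ * EQ) * Q⁻¹ = Wᴴ := by
        rw [← hWQ, Matrix.mul_assoc, hX, Matrix.mul_one]
      rw [Matrix.sub_mul, Matrix.one_mul] at h
      exact sub_eq_iff_eq_add.mp h
    have hle : ‖Q⁻¹‖ ≤ 1 + δ * ‖Q⁻¹‖ :=
      calc ‖Q⁻¹‖ = ‖Wᴴ + Wᴴ * EQ * Q⁻¹‖ := congrArg norm hfix
        _ ≤ ‖Wᴴ‖ + ‖Wᴴ * EQ‖ * ‖Q⁻¹‖ :=
          (norm_add_le _ _).trans (by gcongr; exact Matrix.l2_opNorm_mul _ _)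
        _ ≤ 1 + δ * ‖Q⁻¹‖ := by gcongr
    rw [le_div_iff₀ hpos]
    linarith
  refine ⟨hR, ?_, ?_, ?_, ?_, ?_, hQunit, hinv⟩
  · rw [hQ]
    exact (norm_sub_le _ _).trans (by gcongr)
  · rw [hresid]
    calc ‖EQ * R - EA‖ ≤ ‖EQ‖ * ‖R‖ + ‖EA‖ :=
          (norm_sub_le _ _).trans (by gcongr; exact Matrix.l2_opNorm_mul _ _)
      _ ≤ δ * ((1 + δ) * ‖A‖) + δ * ‖A‖ := by gcongr
      _ = δ * (2 + δ) * ‖A‖ := by ring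
  · rw [hQ, conjTranspose_sub]
    exact hdefect W Wᴴ EQ EQᴴ hW hWH hEQ hEH hUnit'
  · rw [hQ, conjTranspose_sub]
    exact hdefect Wᴴ W EQᴴ EQ hWH hW hEH hEQ hUnit
  · intro σ hσ
    have h := (one_le_mul_norm_inv_of_isSingularValue hQunit hσ).trans
      (mul_le_mul_of_nonneg_left hinv hσ.1)
    rwa [mul_one_div, le_div_iff₀ hpos, one_mul] at h
end

section
/- Let m ≥ 1, δ ∈ [0,1), and let Q_1, …, Q_m ∈ ℂ^{n×n} satisfy ‖Q_i Q_i* − I‖ ≤ δ for every i. Let Q = Q_m Q_{m−1} ⋯ Q_1. Then every singular value σ of Q satisfies (1−δ)^{m/2} ≤ σ ≤ (1+δ)^{m/2}; in particular ‖Q Q* − I‖ ≤ max{(1+δ)^m − 1, 1 − (1−δ)^m}, and if additionally m δ ≤ 1 then ‖Q Q* − I‖ ≤ 2 m δ. -/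
/-!
In the Loewner order, `‖A A* - 1‖ ≤ δ` says `1 - δ ≤ A A* ≤ 1 + δ`. Conjugation preserves this
order, so `c ≤ P P* ≤ d` gives `c A A* ≤ (A P)(A P)* ≤ d A A*`, and by induction on the number of
factors `(1 - δ)^m ≤ Q Q* ≤ (1 + δ)^m` (`loewner_bounds_prod`). This confines the spectrum of
`Q Q*` to `[(1 - δ)^m, (1 + δ)^m]`. The squared singular values of `Q` are the eigenvalues of
`Q* Q`, which has the same characteristic polynomial as `Q Q*`, and the norm of the self-adjoint
`Q Q* - 1` is read off its spectrum. The bound `2 m δ` follows from `(1 + δ)^m ≤ exp (m δ)`,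
the estimate `exp x ≤ 1 + x + x²` on `[0, 1]`, and Bernoulli's inequality.
-/

open Matrix

theorem conj_algebraMap {A : Type*} [CStarAlgebra A] (a : A) (c : ℝ) :
    a * algebraMap ℝ A c * star a = c • (a * star a) := by
  rw [Algebra.algebraMap_eq_smul_one, mul_smul_comm, mul_one, smul_mul_assoc]

section CStar

variable {A : Type*} [CStarAlgebra A] [PartialOrder A] [StarOrderedRing A]

theorem loewner_bounds_of_norm {δ : ℝ} {a : A} (h : ‖a * star a - 1‖ ≤ δ) :
    algebraMap ℝ A (1 - δ) ≤ a * star a ∧ a * star a ≤ algebraMap ℝ A (1 + δ) := by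
  have hsa : IsSelfAdjoint (a * star a - 1) := (IsSelfAdjoint.mul_star_self a).sub (.one A)
  have hmono : algebraMap ℝ A ‖a * star a - 1‖ ≤ algebraMap ℝ A δ := algebraMap_mono A h
  have h1 := hsa.le_algebraMap_norm_self.trans hmono
  have h2 := (neg_le_neg hmono).trans hsa.neg_algebraMap_norm_le_self
  constructor
  · rw [map_sub, map_one]
    have := add_le_add_right h2 1
    convert this using 1 <;> abel
  · rw [map_add, map_one]
    have := add_le_add_right h1 1
    convert this using 1
    abel

/-- Two-sided Loewner bounds for a product, from the same deviation `δ` of every factor. The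
hypothesis `δ ≤ 1` keeps the scalars `(1 - δ) ^ k` nonnegative, so that they preserve the order. -/
theorem loewner_bounds_prod {δ : ℝ} (h0 : 0 ≤ δ) (h1 : δ ≤ 1) (l : List A)
    (hl : ∀ a ∈ l, ‖a * star a - 1‖ ≤ δ) :
    algebraMap ℝ A ((1 - δ) ^ l.length) ≤ l.prod * star l.prod ∧
      l.prod * star l.prod ≤ algebraMap ℝ A ((1 + δ) ^ l.length) := by
  induction l with
  | nil => simp
  | cons a l ih =>
    obtain ⟨ihl, ihu⟩ := ih fun b hb => hl b (List.mem_cons_of_mem _ hb)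
    obtain ⟨al, au⟩ := loewner_bounds_of_norm (hl a List.mem_cons_self)
    have e : (a :: l).prod * star (a :: l).prod = a * (l.prod * star l.prod) * star a := by
      simp only [List.prod_cons, star_mul, mul_assoc]
    rw [e, List.length_cons, pow_succ, pow_succ, map_mul, map_mul]
    constructor
    · refine le_trans ?_ (star_right_conjugate_le_conjugate ihl a)
      rw [conj_algebraMap, ← Algebra.smul_def]
      exact smul_le_smul_of_nonneg_left al (pow_nonneg (by linarith) _)
    · refine (star_right_conjugate_le_conjugate ihu a).trans ?_
      rw [conj_algebraMap, ← Algebra.smul_def]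
      exact smul_le_smul_of_nonneg_left au (pow_nonneg (by linarith) _)

/-- The norm of `cfc (· - 1) a` is bounded by the largest value of `|x - 1|` on the spectrum of
`a`, which lies in `[c, d]`. The hypothesis `c ≤ 1` makes the right-hand side nonnegative, which
matters when the spectrum is empty (the zero algebra). -/
theorem norm_sub_one_le_of_loewner {c d : ℝ} {a : A} (ha : IsSelfAdjoint a)
    (hc : c ≤ 1) (hl : algebraMap ℝ A c ≤ a) (hu : a ≤ algebraMap ℝ A d) :
    ‖a - 1‖ ≤ max (d - 1) (1 - c) := by
  have e : cfc (fun x : ℝ => x - 1) a = a - 1 := by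
    rw [cfc_sub .., cfc_id' ℝ a, cfc_const_one ℝ a]
  rw [← e]
  refine norm_cfc_le (le_max_of_le_right (by linarith)) fun x hx => ?_
  have h1 := (algebraMap_le_iff_le_spectrum ha).1 hl x hx
  have h2 := (le_algebraMap_iff_spectrum_le ha).1 hu x hx
  rw [Real.norm_eq_abs, abs_le]
  constructor
  · linarith [le_max_right (d - 1) (1 - c)]
  · linarith [le_max_left (d - 1) (1 - c)]

end CStar

theorem max_pow_le_two_mul {δ : ℝ} (h0 : 0 ≤ δ) (h1 : δ ≤ 1) (m : ℕ) (hm : (m : ℝ) * δ ≤ 1) :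
    max ((1 + δ) ^ m - 1) (1 - (1 - δ) ^ m) ≤ 2 * m * δ := by
  have hx : 0 ≤ (m : ℝ) * δ := by positivity
  apply max_le
  · have h2 : (1 + δ) ^ m ≤ Real.exp (m * δ) := by
      rw [Real.exp_nat_mul]
      exact pow_le_pow_left₀ (by linarith) (by linarith [Real.add_one_le_exp δ]) m
    have h3 := (abs_le.1 (Real.abs_exp_sub_one_sub_id_le (abs_le.2 ⟨by linarith, hm⟩))).2
    nlinarith
  · have h4 := one_add_mul_le_pow (a := -δ) (by linarith) m
    rw [← sub_eq_add_neg] at h4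
    linarith

open scoped MatrixOrder Matrix.Norms.L2Operator in
theorem stmt_10 {n : ℕ} (m : ℕ) (hm : 1 ≤ m) (δ : ℝ) (hδ : δ ∈ Set.Ico (0 : ℝ) 1)
    (Qs : Fin m → Matrix (Fin n) (Fin n) ℂ)
    (hQs : ∀ i, specNorm (Qs i * (Qs i)ᴴ - 1) ≤ δ) :
    ∀ Q : Matrix (Fin n) (Fin n) ℂ, Q = (List.ofFn Qs).reverse.prod →
      (∀ σ : ℝ, IsSingularValue Q σ →
        (1 - δ) ^ ((m : ℝ) / 2) ≤ σ ∧ σ ≤ (1 + δ) ^ ((m : ℝ) / 2)) ∧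
      specNorm (Q * Qᴴ - 1) ≤ max ((1 + δ) ^ m - 1) (1 - (1 - δ) ^ m) ∧
      ((m : ℝ) * δ ≤ 1 → specNorm (Q * Qᴴ - 1) ≤ 2 * m * δ) := by
  intro Q hQ
  obtain ⟨h0, h1⟩ := hδ
  -- The L2 operator norm instance on matrices is `specNorm` by definition, so `hQs` applies as is.
  obtain ⟨hl, hu⟩ := loewner_bounds_prod h0 h1.le (List.ofFn Qs).reverse (by
    intro a ha
    obtain ⟨i, rfl⟩ := List.mem_ofFn.1 (List.mem_reverse.1 ha)
    exact hQs i)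
  rw [List.length_reverse, List.length_ofFn, ← hQ] at hl hu
  have hsa : IsSelfAdjoint (Q * star Q) := .mul_star_self Q
  have hnorm : specNorm (Q * Qᴴ - 1) ≤ max ((1 + δ) ^ m - 1) (1 - (1 - δ) ^ m) :=
    norm_sub_one_le_of_loewner hsa (pow_le_one₀ (by linarith) (by linarith)) hl hu
  refine ⟨fun σ ⟨hσ, hs⟩ => ?_, hnorm, fun h => hnorm.trans (max_pow_le_two_mul h0 h1.le m h)⟩
  -- `Q * star Q` and `star Q * Q` have the same characteristic polynomial.
  have hs' : σ ^ 2 ∈ spectrum ℝ (Q * star Q) := by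
    rw [← spectrum.algebraMap_mem_iff ℂ, Matrix.mem_spectrum_iff_isRoot_charpoly,
      Matrix.charpoly_mul_comm, ← Matrix.mem_spectrum_iff_isRoot_charpoly]
    simpa [Matrix.star_eq_conjTranspose] using hs
  have b1 := (algebraMap_le_iff_le_spectrum hsa).1 hl _ hs'
  have b2 := (le_algebraMap_iff_spectrum_le hsa).1 hu _ hs'
  have key : ∀ x : ℝ, 0 ≤ x → (x ^ ((m : ℝ) / 2)) ^ 2 = x ^ m := fun x hx => by
    rw [← Real.rpow_natCast, ← Real.rpow_mul hx, ← Real.rpow_natCast]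
    congr 1
    push_cast
    ring
  constructor
  · refine (sq_le_sq₀ (Real.rpow_nonneg (by linarith) _) hσ).1 ?_
    rwa [key _ (by linarith)]
  · refine (sq_le_sq₀ hσ (Real.rpow_nonneg (by linarith) _)).1 ?_
    rwa [key _ (by linarith)]
end

section
/- Let k, m ≥ 1, n = k + 1 + m, ε_1 ∈ (0, 1/2), and let T ∈ ℝ^{n×n} be symmetric tridiagonal with ‖T‖ ≤ 1, partitioned as T = [[T_1, β e_k, 0],[β e_kᵀ, α, β' e_1ᵀ],[0, β' e_1, T_2]], where T_1 ∈ ℝ^{k×k}, T_2 ∈ ℝ^{m×m}, e_k ∈ ℝ^k is the last standard basis vector, e_1 ∈ ℝ^m is the first standard basis vector, and α, β, β' ∈ ℝ. Suppose Ũ_1 ∈ ℝ^{k×k}, Ũ_2 ∈ ℝ^{m×m} and diagonal matrices D̃_1 ∈ ℝ^{k×k}, D̃_2 ∈ ℝ^{m×m} satisfy ‖T_i − Ũ_i D̃_i Ũ_iᵀ‖ ≤ ε_1 and ‖Ũ_i Ũ_iᵀ − I‖ ≤ ε_1/n for i = 1, 2. Let l̃_1 ∈ ℝ^k be the last row of Ũ_1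 and f̃_2 ∈ ℝ^m the first row of Ũ_2, and define the arrowhead matrix H̃ = [[α, β l̃_1ᵀ, β' f̃_2ᵀ],[β l̃_1, D̃_1, 0],[β' f̃_2, 0, D̃_2]] and the block matrix W with row partition (k, 1, m) and column partition (1, k, m) given by W = [[0, Ũ_1, 0],[1, 0, 0],[0, 0, Ũ_2]]. Then ‖T − W H̃ Wᵀ‖ ≤ ε_1 + 2 ε_1 / n. -/
/-!
The error matrix splits as `T - W H̃ Wᵀ = M + B`. The block diagonal part is `M = diag(E₁, 0, E₂)`
with `Eᵢ = Tᵢ - Uᵢ Dᵢ Uᵢᵀ`, so `‖M‖ ≤ ε₁`. The part `B` lives on the middle row and column, with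
border vectors `p = -β G₁ e_k` and `q = -β' G₂ e₁`, where `Gᵢ = Uᵢ Uᵢᵀ - I` (`sub_eq_add_border`).

By Cauchy-Schwarz `‖B‖² ≤ |p|² + |q|²` (`specNorm_border_le`). Writing `δ = ε₁ / n`, the columns of
`Gᵢ` have Euclidean norm at most `δ`, so this is at most `(β² + β'²) δ²`. Finally `β² + β'² ≤ 1`,
because `β` and `β'` are entries of one column of `T` and `‖T‖ ≤ 1`. Hence the error has norm at
most `ε₁ + δ`, which is within the required bound.
-/

open Matrix

/-- The tridiagonal matrix `T = [[T₁, β e_k, 0], [β e_kᵀ, a, β' e₁ᵀ], [0, β' e₁, T₂]]`,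
indexed by the three-block partition `Fin (k+1) ⊕ Unit ⊕ Fin (m+1)`.  Here `e_k` is the
last standard basis vector of `ℝ^(k+1)` and `e₁` the first standard basis vector of
`ℝ^(m+1)`. -/
def blockT (k m : ℕ) (T1 : Matrix (Fin (k + 1)) (Fin (k + 1)) ℝ)
    (T2 : Matrix (Fin (m + 1)) (Fin (m + 1)) ℝ) (a b b' : ℝ) :
    Matrix (Fin (k + 1) ⊕ Unit ⊕ Fin (m + 1)) (Fin (k + 1) ⊕ Unit ⊕ Fin (m + 1)) ℝ :=
  Matrix.of fun i j =>
    match i, j with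
    | Sum.inl i, Sum.inl j => T1 i j
    | Sum.inl i, Sum.inr (Sum.inl _) => if i = Fin.last k then b else 0
    | Sum.inl _, Sum.inr (Sum.inr _) => 0
    | Sum.inr (Sum.inl _), Sum.inl j => if j = Fin.last k then b else 0
    | Sum.inr (Sum.inl _), Sum.inr (Sum.inl _) => a
    | Sum.inr (Sum.inl _), Sum.inr (Sum.inr j) => if j = 0 then b' else 0
    | Sum.inr (Sum.inr _), Sum.inl _ => 0
    | Sum.inr (Sum.inr i), Sum.inr (Sum.inl _) => if i = 0 then b' else 0
    | Sum.inr (Sum.inr i), Sum.inr (Sum.inr j) => T2 i j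

/-- The arrowhead matrix `H̃ = [[a, β l₁ᵀ, β' f₂ᵀ], [β l₁, diag d₁, 0], [β' f₂, 0, diag d₂]]`
indexed by the three-block partition `Unit ⊕ Fin (k+1) ⊕ Fin (m+1)`. -/
def blockH (k m : ℕ) (a b b' : ℝ) (l1 : Fin (k + 1) → ℝ) (f2 : Fin (m + 1) → ℝ)
    (d1 : Fin (k + 1) → ℝ) (d2 : Fin (m + 1) → ℝ) :
    Matrix (Unit ⊕ Fin (k + 1) ⊕ Fin (m + 1)) (Unit ⊕ Fin (k + 1) ⊕ Fin (m + 1)) ℝ :=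
  Matrix.of fun i j =>
    match i, j with
    | Sum.inl _, Sum.inl _ => a
    | Sum.inl _, Sum.inr (Sum.inl j) => b * l1 j
    | Sum.inl _, Sum.inr (Sum.inr j) => b' * f2 j
    | Sum.inr (Sum.inl i), Sum.inl _ => b * l1 i
    | Sum.inr (Sum.inl i), Sum.inr (Sum.inl j) => if i = j then d1 i else 0
    | Sum.inr (Sum.inl _), Sum.inr (Sum.inr _) => 0
    | Sum.inr (Sum.inr i), Sum.inl _ => b' * f2 i
    | Sum.inr (Sum.inr _), Sum.inr (Sum.inl _) => 0
    | Sum.inr (Sum.inr i), Sum.inr (Sum.inr j) => if i = j then d2 i else 0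

/-- The block matrix `W = [[0, U₁, 0], [1, 0, 0], [0, 0, U₂]]` with row partition
`(k+1, 1, m+1)` and column partition `(1, k+1, m+1)`. -/
def blockW (k m : ℕ) (U1 : Matrix (Fin (k + 1)) (Fin (k + 1)) ℝ)
    (U2 : Matrix (Fin (m + 1)) (Fin (m + 1)) ℝ) :
    Matrix (Fin (k + 1) ⊕ Unit ⊕ Fin (m + 1)) (Unit ⊕ Fin (k + 1) ⊕ Fin (m + 1)) ℝ :=
  Matrix.of fun i j =>
    match i, j with
    | Sum.inl i, Sum.inr (Sum.inl j) => U1 i j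
    | Sum.inr (Sum.inl _), Sum.inl _ => (1 : ℝ)
    | Sum.inr (Sum.inr i), Sum.inr (Sum.inr j) => U2 i j
    | _, _ => 0

/-- A bound on the spectral norm, as an inequality between sums of squares of coordinates. -/
lemma specNorm_le_iff {p q : Type*} [Fintype p] [Fintype q] [DecidableEq q]
    (A : Matrix p q ℝ) {c : ℝ} (hc : 0 ≤ c) :
    specNorm A ≤ c ↔ ∀ x : q → ℝ, ∑ i, (A *ᵥ x) i ^ 2 ≤ c ^ 2 * ∑ j, x j ^ 2 := by
  have key : ∀ x : q → ℝ,
      ‖LinearMap.toContinuousLinearMap (Matrix.toEuclideanLin A) (WithLp.toLp 2 x)‖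
          ≤ c * ‖(WithLp.toLp 2 x : EuclideanSpace ℝ q)‖ ↔
        ∑ i, (A *ᵥ x) i ^ 2 ≤ c ^ 2 * ∑ j, x j ^ 2 := by
    intro x
    rw [← sq_le_sq₀ (norm_nonneg _) (by positivity), mul_pow,
      EuclideanSpace.real_norm_sq_eq, EuclideanSpace.real_norm_sq_eq]
    simp [Matrix.toLpLin_apply]
  unfold specNorm
  rw [ContinuousLinearMap.opNorm_le_iff hc]
  exact ⟨fun h x => (key x).1 (h _), fun h x => (key x.ofLp).2 (h _)⟩

lemma specNorm_add_le {p q : Type*} [Fintype p] [Fintype q] [DecidableEq q]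
    (A B : Matrix p q ℝ) : specNorm (A + B) ≤ specNorm A + specNorm B := by
  unfold specNorm
  rw [map_add, map_add]
  exact norm_add_le _ _

lemma sum_sq_col_le {p q : Type*} [Fintype p] [Fintype q] [DecidableEq q]
    (A : Matrix p q ℝ) {c : ℝ} (hc : 0 ≤ c) (h : specNorm A ≤ c) (j : q) :
    ∑ i, A i j ^ 2 ≤ c ^ 2 := by
  have := (specNorm_le_iff A hc).1 h (Pi.single j 1)
  simpa [Pi.single_apply, ite_pow] using this

/-- The symmetric matrix `[[0, p, 0], [pᵀ, 0, qᵀ], [0, q, 0]]`, in the row partition of `blockT`. -/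
def border (k m : ℕ) (p : Fin (k + 1) → ℝ) (q : Fin (m + 1) → ℝ) :
    Matrix (Fin (k + 1) ⊕ Unit ⊕ Fin (m + 1)) (Fin (k + 1) ⊕ Unit ⊕ Fin (m + 1)) ℝ :=
  Matrix.of fun i j =>
    match i, j with
    | Sum.inl i, Sum.inr (Sum.inl _) => p i
    | Sum.inr (Sum.inl _), Sum.inl j => p j
    | Sum.inr (Sum.inl _), Sum.inr (Sum.inr j) => q j
    | Sum.inr (Sum.inr i), Sum.inr (Sum.inl _) => q i
    | _, _ => 0

lemma specNorm_border_le (k m : ℕ) (p : Fin (k + 1) → ℝ) (q : Fin (m + 1) → ℝ) {c : ℝ}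
    (hc : 0 ≤ c) (h : ∑ i, p i ^ 2 + ∑ i, q i ^ 2 ≤ c ^ 2) :
    specNorm (border k m p q) ≤ c := by
  rw [specNorm_le_iff _ hc]
  intro x
  have cs := Finset.sum_mul_sq_le_sq_mul_sq Finset.univ (Sum.elim p q)
    (Sum.elim (fun i => x (Sum.inl i)) (fun i => x (Sum.inr (Sum.inr i))))
  simp only [Fintype.sum_sum_type, Sum.elim_inl, Sum.elim_inr] at cs
  simp only [Fintype.sum_sum_type, Matrix.mulVec, dotProduct, border, Matrix.of_apply,
    Finset.univ_unique, Finset.sum_singleton, zero_mul, Finset.sum_const_zero, zero_add, add_zero,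
    mul_pow, ← Finset.sum_mul]
  have h0 : 0 ≤ ∑ i, x (Sum.inl i) ^ 2 + ∑ i, x (Sum.inr (Sum.inr i)) ^ 2 := by positivity
  have h1 := mul_le_mul_of_nonneg_right h h0
  have h2 := mul_le_mul_of_nonneg_right h (sq_nonneg (x (Sum.inr (Sum.inl default))))
  linarith

/-- The block diagonal matrix `diag(E₁, 0, E₂)` inherits a common bound on its blocks. -/
lemma specNorm_blockT_diag_le (k m : ℕ) (E1 : Matrix (Fin (k + 1)) (Fin (k + 1)) ℝ)
    (E2 : Matrix (Fin (m + 1)) (Fin (m + 1)) ℝ) {c : ℝ} (hc : 0 ≤ c)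
    (h1 : specNorm E1 ≤ c) (h2 : specNorm E2 ≤ c) :
    specNorm (blockT k m E1 E2 0 0 0) ≤ c := by
  rw [specNorm_le_iff _ hc] at h1 h2 ⊢
  intro x
  have e1 := h1 (fun i => x (Sum.inl i))
  have e2 := h2 (fun i => x (Sum.inr (Sum.inr i)))
  simp only [Matrix.mulVec, dotProduct] at e1 e2
  simp only [Fintype.sum_sum_type, Matrix.mulVec, dotProduct, blockT, Matrix.of_apply,
    Finset.univ_unique, Finset.sum_singleton, zero_mul, Finset.sum_const_zero, zero_add, add_zero,
    ite_self]
  have h0 : 0 ≤ c ^ 2 * x (Sum.inr (Sum.inl default)) ^ 2 := by positivity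
  linarith

/-- The off-diagonal entries of the middle column of `T` satisfy `b² + b'² ≤ 1`. -/
lemma sq_add_sq_le_one (k m : ℕ) (T1 : Matrix (Fin (k + 1)) (Fin (k + 1)) ℝ)
    (T2 : Matrix (Fin (m + 1)) (Fin (m + 1)) ℝ) (a b b' : ℝ)
    (h : specNorm (blockT k m T1 T2 a b b') ≤ 1) : b ^ 2 + b' ^ 2 ≤ 1 := by
  have := sum_sq_col_le _ zero_le_one h (Sum.inr (Sum.inl ()))
  simp [Fintype.sum_sum_type, blockT, ite_pow] at this
  nlinarith [sq_nonneg a]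

/-- The middle block `a` is reproduced exactly, and the border error comes from the columns
`G₁ e_k` and `G₂ e₁` of the orthogonality defects. -/
lemma sub_eq_add_border (k m : ℕ)
    (T1 : Matrix (Fin (k + 1)) (Fin (k + 1)) ℝ) (T2 : Matrix (Fin (m + 1)) (Fin (m + 1)) ℝ)
    (a b b' : ℝ)
    (U1 : Matrix (Fin (k + 1)) (Fin (k + 1)) ℝ) (U2 : Matrix (Fin (m + 1)) (Fin (m + 1)) ℝ)
    (d1 : Fin (k + 1) → ℝ) (d2 : Fin (m + 1) → ℝ) :
    blockT k m T1 T2 a b b' -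
        blockW k m U1 U2 *
          blockH k m a b b' (fun j => U1 (Fin.last k) j) (fun j => U2 0 j) d1 d2 *
          (blockW k m U1 U2)ᵀ =
      blockT k m (T1 - U1 * Matrix.diagonal d1 * U1ᵀ) (T2 - U2 * Matrix.diagonal d2 * U2ᵀ) 0 0 0 +
        border k m (fun i => -b * (U1 * U1ᵀ - 1) i (Fin.last k))
          (fun i => -b' * (U2 * U2ᵀ - 1) i 0) := by
  ext (i | i | i) (j | j | j) <;>
    simp [blockT, blockW, blockH, border, Matrix.mul_apply, Fintype.sum_sum_type,
      Matrix.diagonal_apply, Matrix.one_apply, sub_eq_add_neg]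
  all_goals
    simp only [mul_add, Finset.mul_sum, mul_comm, mul_left_comm]
    split_ifs <;> ring

theorem stmt_13 (k m : ℕ) (ε1 : ℝ) (hε1 : ε1 ∈ Set.Ioo (0 : ℝ) (1 / 2))
    (T1 : Matrix (Fin (k + 1)) (Fin (k + 1)) ℝ) (T2 : Matrix (Fin (m + 1)) (Fin (m + 1)) ℝ)
    (a b b' : ℝ)
    (hT1sym : T1.IsSymm) (hT2sym : T2.IsSymm)
    (hT1tri : ∀ i j : Fin (k + 1), ((i : ℕ) + 1 < (j : ℕ) ∨ (j : ℕ) + 1 < (i : ℕ)) → T1 i j = 0)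
    (hT2tri : ∀ i j : Fin (m + 1), ((i : ℕ) + 1 < (j : ℕ) ∨ (j : ℕ) + 1 < (i : ℕ)) → T2 i j = 0)
    (hTnorm : specNorm (blockT k m T1 T2 a b b') ≤ 1)
    (U1 : Matrix (Fin (k + 1)) (Fin (k + 1)) ℝ) (U2 : Matrix (Fin (m + 1)) (Fin (m + 1)) ℝ)
    (d1 : Fin (k + 1) → ℝ) (d2 : Fin (m + 1) → ℝ)
    (hU1 : specNorm (T1 - U1 * Matrix.diagonal d1 * U1ᵀ) ≤ ε1)
    (hU2 : specNorm (T2 - U2 * Matrix.diagonal d2 * U2ᵀ) ≤ ε1)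
    (hO1 : specNorm (U1 * U1ᵀ - 1) ≤ ε1 / (k + m + 3))
    (hO2 : specNorm (U2 * U2ᵀ - 1) ≤ ε1 / (k + m + 3)) :
    specNorm (blockT k m T1 T2 a b b' -
        blockW k m U1 U2 *
          blockH k m a b b' (fun j => U1 (Fin.last k) j) (fun j => U2 0 j) d1 d2 *
          (blockW k m U1 U2)ᵀ)
      ≤ ε1 + 2 * ε1 / (k + m + 3) := by
  obtain ⟨hε, -⟩ := hε1
  set δ : ℝ := ε1 / (k + m + 3) with hδ
  have hδ0 : 0 ≤ δ := by positivity
  have hb := sq_add_sq_le_one k m T1 T2 a b b' hTnorm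
  have c1 := sum_sq_col_le _ hδ0 hO1 (Fin.last k)
  have c2 := sum_sq_col_le _ hδ0 hO2 0
  have hB : specNorm (border k m (fun i => -b * (U1 * U1ᵀ - 1) i (Fin.last k))
      (fun i => -b' * (U2 * U2ᵀ - 1) i 0)) ≤ δ := by
    apply specNorm_border_le _ _ _ _ hδ0
    simp only [mul_pow, neg_sq, ← Finset.mul_sum]
    nlinarith [mul_le_mul_of_nonneg_left c1 (sq_nonneg b),
      mul_le_mul_of_nonneg_left c2 (sq_nonneg b'),
      mul_le_mul_of_nonneg_right hb (sq_nonneg δ)]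
  have hM := specNorm_blockT_diag_le k m _ _ hε.le hU1 hU2
  rw [sub_eq_add_border, mul_div_assoc, ← hδ]
  linarith [specNorm_add_le
    (blockT k m (T1 - U1 * Matrix.diagonal d1 * U1ᵀ) (T2 - U2 * Matrix.diagonal d2 * U2ᵀ) 0 0 0)
    (border k m (fun i => -b * (U1 * U1ᵀ - 1) i (Fin.last k))
      (fun i => -b' * (U2 * U2ᵀ - 1) i 0))]
end
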